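/- Upper bound on Dirichlet boundary-crossing probabilities: Let m ≥ 1, b > 0, and let f : {0,…,m} → [0,b] satisfy f(0) = 0 and f(m) = b. Let α = (α_0,…,α_m) ∈ ℝ_{>0}^{m+1}, set ᾱ = Σ_{j=0}^m α_j and p̄(ℓ) = α_ℓ/ᾱ for ℓ = 0,…,m. Fix ε ∈ (0,1) and assume min(α_0, α_m) ≥ c₀·ε^{−2}. Define α⁻ = (α_0 + 1, α_1, …, α_{m−1}, α_m). Then for every μ ∈ (p̄f, b), P_{w ∼ Dir(α⁻)}( wf ≥ μ ) ≤ (1 + ε) · P_{ζ ∼ N(0,1)}( ζ ≥ √(2 ᾱ Kinf(p̄, μ, f)) ). -/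

import Mathlib

open MeasureTheory ProbabilityTheory Real Set
open scoped ENNReal

noncomputable section

/-- The absolute constant `c₀ = (2/π)(8 + 49√6/9)²`. -/
def c0 : ℝ := (2 / Real.pi) * (8 + 49 * Real.sqrt 6 / 9) ^ 2

/-- Unnormalized density of `Dir(α)` in the first `m` coordinates. -/
def dirichletDensity (m : ℕ) (α : Fin (m + 1) → ℝ) : (Fin m → ℝ) → ℝ :=
  Set.indicator {x | (∀ i, 0 ≤ x i) ∧ ∑ i, x i ≤ 1}
    (fun x => (∏ i : Fin m, x i ^ (α i.castSucc - 1)) * (1 - ∑ i, x i) ^ (α (Fin.last m) - 1))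

def dirichletBase (m : ℕ) (α : Fin (m + 1) → ℝ) : Measure (Fin m → ℝ) :=
  volume.withDensity fun x => ENNReal.ofReal (dirichletDensity m α x)

/-- The Dirichlet distribution `Dir(α)`, as the law of the vector
`(x₀, …, x_{m-1}, 1 - ∑ x_i)` on the simplex `Δ_m ⊆ ℝ^{m+1}`. -/
def dirichlet (m : ℕ) (α : Fin (m + 1) → ℝ) : Measure (Fin (m + 1) → ℝ) :=
  Measure.map (fun x : Fin m → ℝ => Fin.snoc x (1 - ∑ i, x i))
    ((dirichletBase m α Set.univ)⁻¹ • dirichletBase m α)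

/-- Kullback–Leibler divergence between finitely supported `p, q` (for `p ≪ q`). -/
def klReal {m : ℕ} (p q : Fin (m + 1) → ℝ) : ℝ :=
  ∑ i, if p i = 0 then 0 else p i * Real.log (p i / q i)

/-- `Kinf(p, μ, f) = inf { KL(p,q) : q ∈ Δ_m, qf ≥ μ }`. -/
def Kinf {m : ℕ} (p : Fin (m + 1) → ℝ) (μ : ℝ) (f : Fin (m + 1) → ℝ) : ℝ :=
  sInf {x | ∃ q ∈ stdSimplex ℝ (Fin (m + 1)),
    (∀ i, q i = 0 → p i = 0) ∧ μ ≤ ∑ i, f i * q i ∧ x = klReal p q}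

/-- `Kinf*(p, μ, f) = inf { KL(p,q) : q ∈ Δ_m, qf = μ }`. -/
def Kinfstar {m : ℕ} (p : Fin (m + 1) → ℝ) (μ : ℝ) (f : Fin (m + 1) → ℝ) : ℝ :=
  sInf {x | ∃ q ∈ stdSimplex ℝ (Fin (m + 1)),
    (∀ i, q i = 0 → p i = 0) ∧ (∑ i, f i * q i) = μ ∧ x = klReal p q}

/-- `A(p, μ, f) = sgn(μ - pf) √(2 Kinf*(p, μ, f))`. -/
def Afun {m : ℕ} (p : Fin (m + 1) → ℝ) (μ : ℝ) (f : Fin (m + 1) → ℝ) : ℝ :=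
  Real.sign (μ - ∑ ℓ, f ℓ * p ℓ) * Real.sqrt (2 * Kinfstar p μ f)

/-!
Write `S = ∑ αᵢ`, `p = α / S`, and let `β = S p + e₀` be the parameter of the Dirichlet law.

If `g` has independent `Gamma(βᵢ, 1)` coordinates, then `g / ∑ gᵢ` is `Dir(β)`-distributed and
independent of `∑ gᵢ`. The event `wf = u` reads `∑ (fᵢ - u) gᵢ = 0`, so an exponential tilt and a
Fourier inversion bound the density of `wf` at `u`, for every `λ` with all `λ (fᵢ - u) < 1`, by
`S / (2π) · ∫ ∏ |1 - (λ + i s) (fᵢ - u)| ^ (-βᵢ) ds`. Smoothing by a Gaussian of vanishing variance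
and Fatou's lemma give this upper bound without any regularity of the density.

Let `λ` be the Lagrange multiplier of `Kinf(p, u, f)`. Then `xᵢ = 1 - λ (fᵢ - u)` is the ratio of
`p` to the minimizer, and the product at `s = 0` is `exp (-S Kinf) / x₀`, where `1 / x₀` comes from
the extra unit of weight. With `aᵢ = (fᵢ - u) / xᵢ`, Bernoulli's inequality bounds the remaining
factors by a single `(1 + a² s²) ^ (-n / 2)`, in which `a` is the largest of the `|aᵢ|` (attained at
an endpoint of the range of `f`) and `n a² = S ∑ pᵢ aᵢ²`. This is a Student integral, within a
factor `1 + ε` of the Gaussian value `√(2π / (n a²))` once `n ≥ 1 + 1 / ε`.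

The inequality `2 Kinf ≤ λ² x₀² ∑ pᵢ aᵢ²` absorbs `1 / x₀`: what is left is `1 + ε` times the
standard Gaussian density at `r = √(2 S Kinf)`, times `|dr / du| = S λ / r`. Integrating over
`u ≥ μ` gives the claim.
-/

/-! ### Product measures -/

section ProductMeasures

theorem lintegral_eq_mul_lintegral_comp_smul {E : Type*} [NormedAddCommGroup E]
    [NormedSpace ℝ E] [MeasurableSpace E] [BorelSpace E] [FiniteDimensional ℝ E] (μ : Measure E)
    [μ.IsAddHaarMeasure] (h : E → ℝ≥0∞) {t : ℝ} (ht : t ≠ 0) :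
    ∫⁻ x, h x ∂μ =
      ENNReal.ofReal (|t| ^ Module.finrank ℝ E) * ∫⁻ x, h (t • x) ∂μ := by
  have hmap : ∫⁻ x, h (t • x) ∂μ = ∫⁻ x, h x ∂μ.map (t • ·) :=
    ((Homeomorph.smulOfNeZero t ht).measurableEmbedding.lintegral_map _).symm
  rw [hmap, Measure.map_addHaar_smul μ ht, lintegral_smul_measure, smul_eq_mul, ← mul_assoc,
    ← ENNReal.ofReal_mul (by positivity), abs_inv, abs_pow, mul_inv_cancel₀ (by positivity),
    ENNReal.ofReal_one, one_mul]

theorem pi_withDensity_ofReal {ι : Type*} [Fintype ι] {X : ι → Type*}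
    [∀ i, MeasurableSpace (X i)] (μ : ∀ i, Measure (X i)) [∀ i, SigmaFinite (μ i)]
    {f : ∀ i, X i → ℝ} (hf : ∀ i, Integrable (f i) (μ i)) (hf₀ : ∀ i x, 0 ≤ f i x) :
    Measure.pi (fun i => (μ i).withDensity fun x => ENNReal.ofReal (f i x)) =
      (Measure.pi μ).withDensity fun x => ENNReal.ofReal (∏ i, f i (x i)) := by
  have := fun i => SigmaFinite.withDensity_ofReal (μ := μ i) (f i)
  refine Measure.pi_eq fun s hs => ?_
  have hfs : ∀ i, Integrable ((s i).indicator (f i)) (μ i) := fun i => (hf i).indicator (hs i)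
  have hfs₀ : ∀ i x, 0 ≤ (s i).indicator (f i) x :=
    fun i => Set.indicator_nonneg fun x _ => hf₀ i x
  have hprod : (univ.pi s).indicator (fun x => ENNReal.ofReal (∏ i, f i (x i))) =
      fun x => ENNReal.ofReal (∏ i, (s i).indicator (f i) (x i)) := by
    ext x
    by_cases hx : x ∈ univ.pi s
    · simp_all
    · obtain ⟨i, hi⟩ : ∃ i, x i ∉ s i := by simpa using hx
      rw [indicator_of_notMem hx, Finset.prod_eq_zero (Finset.mem_univ i)
        (indicator_of_notMem hi (f i)), ENNReal.ofReal_zero]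
  rw [withDensity_apply _ (MeasurableSet.univ_pi hs), ← lintegral_indicator (.univ_pi hs), hprod,
    ← ofReal_integral_eq_lintegral_ofReal (.fintype_prod_dep hfs)
      (ae_of_all _ fun x => Finset.prod_nonneg fun i _ => hfs₀ i _),
    integral_fintype_prod_eq_prod, ENNReal.ofReal_prod_of_nonneg
      fun i _ => integral_nonneg (hfs₀ i)]
  refine Finset.prod_congr rfl fun i _ => ?_
  rw [ofReal_integral_eq_lintegral_ofReal (hfs i) (ae_of_all _ (hfs₀ i)),
    withDensity_apply _ (hs i), ← lintegral_indicator (hs i)]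
  refine lintegral_congr fun x => ?_
  by_cases hx : x ∈ s i <;> simp [hx]

end ProductMeasures

/-! ### Dirichlet laws as normalized Gamma vectors -/

section GammaDirichlet

variable {m : ℕ} {β : Fin (m + 1) → ℝ}

/-- The vector of total mass `t` whose first `m` coordinates are `x`. For `t = 1` it is the
parametrization of the simplex through which `dirichlet` is defined. -/
def snocWithSum (t : ℝ) (x : Fin m → ℝ) : Fin (m + 1) → ℝ :=
  Fin.snoc x (t - ∑ i, x i)

theorem smul_snocWithSum_one (t : ℝ) (x : Fin m → ℝ) :
    t • snocWithSum 1 x = snocWithSum t (t • x) := by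
  ext i
  refine Fin.lastCases ?_ (fun j => ?_) i <;> simp [snocWithSum, ← Finset.mul_sum, mul_sub]

theorem sum_snocWithSum (t : ℝ) (x : Fin m → ℝ) : ∑ i, snocWithSum t x i = t := by
  simp [snocWithSum, Fin.sum_univ_castSucc]

theorem measurable_snocWithSum : Measurable fun p : ℝ × (Fin m → ℝ) => snocWithSum p.1 p.2 := by
  refine measurable_pi_iff.2 (Fin.lastCases ?_ fun j => ?_) <;>
    simp only [snocWithSum, Fin.snoc_last, Fin.snoc_castSucc] <;> fun_prop

theorem measurable_snocWithSum_right (t : ℝ) :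
    Measurable (snocWithSum t : (Fin m → ℝ) → Fin (m + 1) → ℝ) :=
  measurable_snocWithSum.comp measurable_prodMk_left

theorem lintegral_eq_lintegral_snocWithSum {H : (Fin (m + 1) → ℝ) → ℝ≥0∞} (hH : Measurable H) :
    ∫⁻ g, H g = ∫⁻ t, ∫⁻ x : Fin m → ℝ, H (snocWithSum t x) := by
  have hsnoc : Measurable fun p : ℝ × (Fin m → ℝ) => H (Fin.snoc p.2 p.1) := by
    have h := hH.comp (measurable_snocWithSum.comp
      (f := fun p : ℝ × (Fin m → ℝ) => (p.1 + ∑ i, p.2 i, p.2)) (by fun_prop))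
    simpa [Function.comp_def, snocWithSum] using h
  calc ∫⁻ g, H g
      = ∫⁻ p : ℝ × (Fin m → ℝ), H (Fin.snoc p.2 p.1) := by
        rw [← ((volume_preserving_piFinSuccAbove (fun _ : Fin (m + 1) => ℝ)
          (Fin.last m)).symm).lintegral_comp hH]
        simp [MeasurableEquiv.piFinSuccAbove, Fin.insertNthEquiv, ← Fin.insertNth_last']
    _ = ∫⁻ x : Fin m → ℝ, ∫⁻ r, H (Fin.snoc x r) := by
        rw [Measure.volume_eq_prod, lintegral_prod_symm' _ hsnoc]
    _ = ∫⁻ x : Fin m → ℝ, ∫⁻ t, H (snocWithSum t x) :=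
        lintegral_congr fun x => (lintegral_sub_right_eq_self (fun r => H (Fin.snoc x r)) _).symm
    _ = ∫⁻ t, ∫⁻ x : Fin m → ℝ, H (snocWithSum t x) :=
        lintegral_lintegral_swap
          (hH.comp (measurable_snocWithSum.comp measurable_swap)).aemeasurable

theorem measurable_dirichletDensity (m : ℕ) (β : Fin (m + 1) → ℝ) :
    Measurable (dirichletDensity m β) := by
  have hnonneg : MeasurableSet {x : Fin m → ℝ | ∀ i, 0 ≤ x i} := by
    rw [Set.ofPred_forall]
    exact MeasurableSet.iInter fun i => measurableSet_le measurable_const (measurable_pi_apply i)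
  have hsum : MeasurableSet {x : Fin m → ℝ | ∑ i, x i ≤ 1} :=
    measurableSet_le (by fun_prop) measurable_const
  exact Measurable.indicator (by fun_prop) (hnonneg.inter hsum)

theorem dirichletDensity_of_nonneg {x : Fin m → ℝ} (hx : ∀ i, 0 ≤ snocWithSum 1 x i) :
    dirichletDensity m β x = ∏ i, snocWithSum 1 x i ^ (β i - 1) := by
  have hmem : x ∈ {x : Fin m → ℝ | (∀ i, 0 ≤ x i) ∧ ∑ i, x i ≤ 1} :=
    ⟨fun i => by simpa [snocWithSum] using hx i.castSucc,
      by simpa [snocWithSum] using hx (Fin.last m)⟩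
  rw [dirichletDensity, Set.indicator_of_mem hmem, Fin.prod_univ_castSucc]
  simp [snocWithSum]

theorem dirichletDensity_of_neg {x : Fin m → ℝ} {i : Fin (m + 1)} (hx : snocWithSum 1 x i < 0) :
    dirichletDensity m β x = 0 := by
  refine Set.indicator_of_notMem (fun h => hx.not_ge ?_) _
  induction i using Fin.lastCases with
  | last => simpa [snocWithSum] using h.2
  | cast j => simpa [snocWithSum] using h.1 j

theorem gammaPDFReal_one_mul {b t y : ℝ} (ht : 0 < t) (hy : 0 ≤ y) :
    gammaPDFReal b 1 (t * y) = (Gamma b)⁻¹ * y ^ (b - 1) * (t ^ (b - 1) * exp (-(t * y))) := by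
  rw [gammaPDFReal, if_pos (mul_nonneg ht.le hy), Real.mul_rpow ht.le hy, Real.one_rpow, one_div,
    one_mul]
  ring

theorem prod_gammaPDFReal_smul_of_sum_eq_one (hβ : ∀ i, 0 < β i) {w : Fin (m + 1) → ℝ}
    (hw : ∀ i, 0 ≤ w i) (hw₁ : ∑ i, w i = 1) {t : ℝ} (ht : 0 < t) :
    t ^ m * ∏ i, gammaPDFReal (β i) 1 (t * w i) = gammaPDFReal (∑ i, β i) 1 t *
      ((Gamma (∑ i, β i) / ∏ i, Gamma (β i)) * ∏ i, w i ^ (β i - 1)) := by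
  have hpow : t ^ m * ∏ i, t ^ (β i - 1) = t ^ (∑ i, β i - 1) := by
    rw [← Real.rpow_sum_of_pos ht, ← Real.rpow_natCast, ← Real.rpow_add ht]
    congr 1
    simp
    ring
  have hexp : ∏ i, exp (-(t * w i)) = exp (-t) := by
    rw [← Real.exp_sum, Finset.sum_neg_distrib, ← Finset.mul_sum, hw₁, mul_one]
  have hΓ : Gamma (∑ i, β i) ≠ 0 :=
    (Gamma_pos_of_pos (Finset.sum_pos (fun i _ => hβ i) Finset.univ_nonempty)).ne'
  have htotal := gammaPDFReal_one_mul (b := ∑ i, β i) ht zero_le_one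
  rw [mul_one, Real.one_rpow, mul_one] at htotal
  simp only [htotal, gammaPDFReal_one_mul ht (hw _), Finset.prod_mul_distrib,
    Finset.prod_inv_distrib, hexp, ← hpow]
  field_simp

theorem prod_gammaPDFReal_snocWithSum (hβ : ∀ i, 0 < β i) {t : ℝ} (ht : 0 < t) (x : Fin m → ℝ) :
    t ^ m * ∏ i, gammaPDFReal (β i) 1 (snocWithSum t (t • x) i) = gammaPDFReal (∑ i, β i) 1 t *
      ((Gamma (∑ i, β i) / ∏ i, Gamma (β i)) * dirichletDensity m β x) := by
  simp only [← smul_snocWithSum_one, Pi.smul_apply, smul_eq_mul]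
  by_cases hx : ∀ i, 0 ≤ snocWithSum 1 x i
  · rw [dirichletDensity_of_nonneg hx]
    exact prod_gammaPDFReal_smul_of_sum_eq_one hβ hx (sum_snocWithSum 1 x) ht
  · push Not at hx
    obtain ⟨i, hi⟩ := hx
    rw [dirichletDensity_of_neg hi, Finset.prod_eq_zero (Finset.mem_univ i), mul_zero, mul_zero,
      mul_zero]
    rw [gammaPDFReal, if_neg (mul_neg_of_pos_of_neg ht hi).not_ge]

theorem prod_gammaPDFReal_snocWithSum_of_neg {t : ℝ} (ht : t < 0) (x : Fin m → ℝ) :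
    ∏ i, gammaPDFReal (β i) 1 (snocWithSum t x i) = 0 := by
  obtain ⟨i, -, hi⟩ := Finset.exists_lt_of_sum_lt (f := snocWithSum t x) (g := fun _ => 0)
    (s := Finset.univ) (by simpa [sum_snocWithSum] using ht)
  exact Finset.prod_eq_zero (Finset.mem_univ i) (by rw [gammaPDFReal, if_neg hi.not_ge])

theorem pi_gammaMeasure_eq_withDensity (hβ : ∀ i, 0 < β i) :
    Measure.pi (fun i => gammaMeasure (β i) 1) =
      volume.withDensity fun g => ENNReal.ofReal (∏ i, gammaPDFReal (β i) 1 (g i)) := by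
  refine pi_withDensity_ofReal (fun _ => volume) (fun i => ?_)
    fun i => gammaPDFReal_nonneg (hβ i) one_pos
  refine ⟨(measurable_gammaPDFReal _ _).aestronglyMeasurable, ?_⟩
  rw [hasFiniteIntegral_iff_ofReal (ae_of_all _ (gammaPDFReal_nonneg (hβ i) one_pos))]
  exact (lintegral_gammaPDF_eq_one (hβ i) one_pos).trans_lt ENNReal.one_lt_top

theorem lintegral_gammaMeasure_eq (b : ℝ) {h : ℝ → ℝ≥0∞} (hh : Measurable h) :
    ∫⁻ t, h t ∂gammaMeasure b 1 = ∫⁻ t, ENNReal.ofReal (gammaPDFReal b 1 t) * h t :=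
  lintegral_withDensity_eq_lintegral_mul _ (measurable_gammaPDFReal b 1).ennreal_ofReal hh

theorem lintegral_prod_gammaPDFReal_snocWithSum (hβ : ∀ i, 0 < β i) {t : ℝ} (ht : 0 < t)
    {Φ : (Fin (m + 1) → ℝ) → ℝ≥0∞} (hΦ : Measurable Φ) :
    ∫⁻ x : Fin m → ℝ, ENNReal.ofReal (∏ i, gammaPDFReal (β i) 1 (snocWithSum t x i)) *
        Φ (snocWithSum t x) =
      ENNReal.ofReal (gammaPDFReal (∑ i, β i) 1 t) *
        (ENNReal.ofReal (Gamma (∑ i, β i) / ∏ i, Gamma (β i)) *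
          ∫⁻ x, Φ (t • snocWithSum 1 x) ∂dirichletBase m β) := by
  have hΦt : Measurable fun x : Fin m → ℝ => Φ (t • snocWithSum 1 x) :=
    hΦ.comp ((measurable_snocWithSum_right 1).const_smul t)
  have hDir := (measurable_dirichletDensity m β).ennreal_ofReal
  have hC : 0 ≤ Gamma (∑ i, β i) / ∏ i, Gamma (β i) :=
    div_nonneg (Gamma_nonneg_of_nonneg (Finset.sum_nonneg fun i _ => (hβ i).le))
      (Finset.prod_nonneg fun i _ => Gamma_nonneg_of_nonneg (hβ i).le)
  rw [lintegral_eq_mul_lintegral_comp_smul _ _ ht.ne', Module.finrank_fin_fun, abs_of_pos ht,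
    dirichletBase, lintegral_withDensity_eq_lintegral_mul _ hDir hΦt,
    ← lintegral_const_mul' _ _ ENNReal.ofReal_ne_top,
    ← lintegral_const_mul' _ _ ENNReal.ofReal_ne_top,
    ← lintegral_const_mul' _ _ ENNReal.ofReal_ne_top]
  refine lintegral_congr fun x => ?_
  rw [← mul_assoc, ← ENNReal.ofReal_mul (by positivity), prod_gammaPDFReal_snocWithSum hβ ht,
    ENNReal.ofReal_mul (gammaPDFReal_nonneg (Finset.sum_pos (fun i _ => hβ i)
      Finset.univ_nonempty) one_pos _), ENNReal.ofReal_mul hC, Pi.mul_apply, smul_snocWithSum_one]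
  ring

theorem lintegral_pi_gammaMeasure_eq_dirichletBase (hβ : ∀ i, 0 < β i)
    {Φ : (Fin (m + 1) → ℝ) → ℝ≥0∞} (hΦ : Measurable Φ) :
    ∫⁻ g, Φ g ∂Measure.pi (fun i => gammaMeasure (β i) 1) =
      ∫⁻ t, ENNReal.ofReal (Gamma (∑ i, β i) / ∏ i, Gamma (β i)) *
        ∫⁻ x, Φ (t • snocWithSum 1 x) ∂dirichletBase m β ∂gammaMeasure (∑ i, β i) 1 := by
  have hdens : Measurable fun g : Fin (m + 1) → ℝ =>
      ENNReal.ofReal (∏ i, gammaPDFReal (β i) 1 (g i)) :=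
    (Finset.measurable_prod _ fun i _ =>
      (measurable_gammaPDFReal _ _).comp (measurable_pi_apply i)).ennreal_ofReal
  have hjoint : Measurable fun p : ℝ × (Fin m → ℝ) => Φ (p.1 • snocWithSum 1 p.2) :=
    hΦ.comp (measurable_fst.smul ((measurable_snocWithSum_right 1).comp measurable_snd))
  have : SFinite (dirichletBase m β) := by unfold dirichletBase; infer_instance
  rw [pi_gammaMeasure_eq_withDensity hβ, lintegral_withDensity_eq_lintegral_mul _ hdens hΦ,
    lintegral_eq_lintegral_snocWithSum (hdens.mul hΦ),
    lintegral_gammaMeasure_eq _ (hjoint.lintegral_prod_right'.const_mul _)]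
  refine lintegral_congr_ae ?_
  filter_upwards [Measure.ae_ne volume (0 : ℝ)] with t ht
  rcases ht.lt_or_gt with ht | ht
  · simp only [Pi.mul_apply, prod_gammaPDFReal_snocWithSum_of_neg ht]
    simp [gammaPDFReal, ht.not_ge]
  · exact lintegral_prod_gammaPDFReal_snocWithSum hβ ht hΦ

theorem ofReal_mul_dirichletBase_univ (hβ : ∀ i, 0 < β i) :
    ENNReal.ofReal (Gamma (∑ i, β i) / ∏ i, Gamma (β i)) * dirichletBase m β univ = 1 := by
  have := fun i => isProbabilityMeasure_gammaMeasure (hβ i) one_pos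
  have := isProbabilityMeasure_gammaMeasure
    (Finset.sum_pos (fun i _ => hβ i) Finset.univ_nonempty) one_pos
  simpa using (lintegral_pi_gammaMeasure_eq_dirichletBase hβ
    (Φ := fun _ => 1) measurable_const).symm

theorem dirichlet_eq_map (hβ : ∀ i, 0 < β i) :
    dirichlet m β = (ENNReal.ofReal (Gamma (∑ i, β i) / ∏ i, Gamma (β i)) •
      dirichletBase m β).map (snocWithSum 1) := by
  rw [ENNReal.eq_inv_of_mul_eq_one_left (ofReal_mul_dirichletBase_univ hβ)]
  rfl

theorem lintegral_pi_gammaMeasure (hβ : ∀ i, 0 < β i)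
    {Φ : (Fin (m + 1) → ℝ) → ℝ≥0∞} (hΦ : Measurable Φ) :
    ∫⁻ g, Φ g ∂Measure.pi (fun i => gammaMeasure (β i) 1) =
      ∫⁻ t, ∫⁻ w, Φ (t • w) ∂dirichlet m β ∂gammaMeasure (∑ i, β i) 1 := by
  rw [lintegral_pi_gammaMeasure_eq_dirichletBase hβ hΦ, dirichlet_eq_map hβ]
  refine lintegral_congr fun t => ?_
  rw [lintegral_map (by fun_prop) (measurable_snocWithSum_right 1), lintegral_smul_measure,
    smul_eq_mul]

theorem ae_sum_eq_one_dirichlet (m : ℕ) (β : Fin (m + 1) → ℝ) :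
    ∀ᵐ w ∂dirichlet m β, ∑ i, w i = 1 :=
  (ae_map_iff (measurable_snocWithSum_right 1).aemeasurable
    (measurableSet_eq_fun (by fun_prop) measurable_const)).2
    (ae_of_all _ fun x => sum_snocWithSum 1 x)

theorem ae_nonneg_dirichlet (m : ℕ) (β : Fin (m + 1) → ℝ) :
    ∀ᵐ w ∂dirichlet m β, ∀ i, 0 ≤ w i := by
  have hmeas : MeasurableSet {w : Fin (m + 1) → ℝ | ∀ i, 0 ≤ w i} := by
    rw [Set.ofPred_forall]
    exact MeasurableSet.iInter fun i => measurableSet_le measurable_const (measurable_pi_apply i)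
  refine (ae_map_iff (measurable_snocWithSum_right 1).aemeasurable hmeas).2
    (Measure.ae_smul_measure ?_ _)
  refine (ae_withDensity_iff (measurable_dirichletDensity m β).ennreal_ofReal).2
    (ae_of_all _ fun x hx => ?_)
  contrapose! hx
  obtain ⟨i, hi⟩ := hx
  rw [dirichletDensity_of_neg hi, ENNReal.ofReal_zero]

theorem ae_mem_stdSimplex_dirichlet (m : ℕ) (β : Fin (m + 1) → ℝ) :
    ∀ᵐ w ∂dirichlet m β, w ∈ stdSimplex ℝ (Fin (m + 1)) :=
  (ae_nonneg_dirichlet m β).and (ae_sum_eq_one_dirichlet m β)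

theorem lintegral_rpow_gammaMeasure {b c : ℝ} (hb : 0 < b) (hbc : 0 < b + c) :
    ∫⁻ t, ENNReal.ofReal (t ^ c) ∂gammaMeasure b 1 =
      ENNReal.ofReal (Gamma (b + c) / Gamma b) := by
  have hpdf : ∀ᵐ t ∂(volume : Measure ℝ), ENNReal.ofReal (gammaPDFReal b 1 t) *
      ENNReal.ofReal (t ^ c) =
        ENNReal.ofReal (Gamma (b + c) / Gamma b) * gammaPDF (b + c) 1 t := by
    filter_upwards [Measure.ae_ne volume (0 : ℝ)] with t ht
    rcases ht.lt_or_gt with ht | ht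
    · simp [gammaPDF_of_neg ht, gammaPDFReal, ht.not_ge]
    · rw [gammaPDF, ← ENNReal.ofReal_mul (gammaPDFReal_nonneg hb one_pos _),
        ← ENNReal.ofReal_mul (by positivity), gammaPDFReal, gammaPDFReal, if_pos ht.le,
        if_pos ht.le, add_sub_right_comm, Real.rpow_add ht]
      simp only [Real.one_rpow]
      congr 1
      field_simp
  rw [lintegral_gammaMeasure_eq _ (by fun_prop), lintegral_congr_ae hpdf,
    lintegral_const_mul' _ _ ENNReal.ofReal_ne_top, lintegral_gammaPDF_eq_one hbc one_pos, mul_one]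

theorem lintegral_inv_gammaMeasure {b : ℝ} (hb : 1 < b) :
    ∫⁻ t, ENNReal.ofReal t⁻¹ ∂gammaMeasure b 1 = ENNReal.ofReal (b - 1)⁻¹ := by
  have hb₁ : 0 < b - 1 := sub_pos.2 hb
  have hΓ : Gamma b = (b - 1) * Gamma (b - 1) := by
    rw [← Real.Gamma_add_one hb₁.ne', sub_add_cancel]
  have h := lintegral_rpow_gammaMeasure (c := -1) (by linarith : 0 < b) (by linarith)
  simpa only [Real.rpow_neg_one, ← sub_eq_add_neg, hΓ,
    div_mul_cancel_right₀ (Gamma_pos_of_pos hb₁).ne'] using h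

theorem pos_ae_gammaMeasure (b r : ℝ) : ∀ᵐ t ∂gammaMeasure b r, 0 < t := by
  refine (ae_withDensity_iff (measurable_gammaPDFReal b r).ennreal_ofReal).2 ?_
  filter_upwards [Measure.ae_ne volume (0 : ℝ)] with t ht hpdf
  contrapose! hpdf
  exact gammaPDF_of_neg (hpdf.lt_of_ne ht)

theorem dirichlet_eq_lintegral_pi_gammaMeasure (hβ : ∀ i, 0 < β i) (hβ₁ : 1 < ∑ i, β i)
    {E : Set (Fin (m + 1) → ℝ)} (hE : MeasurableSet E) :
    dirichlet m β E = ENNReal.ofReal (∑ i, β i - 1) *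
      ∫⁻ g in {g | 0 < ∑ i, g i ∧ (∑ i, g i)⁻¹ • g ∈ E}, ENNReal.ofReal (∑ i, g i)⁻¹
        ∂Measure.pi (fun i => gammaMeasure (β i) 1) := by
  set F : Set (Fin (m + 1) → ℝ) := {g | 0 < ∑ i, g i ∧ (∑ i, g i)⁻¹ • g ∈ E}
  have hsumMeas : Measurable fun g : Fin (m + 1) → ℝ => ∑ i, g i := by fun_prop
  have hF : MeasurableSet F := (measurableSet_lt measurable_const hsumMeas).inter
    ((by fun_prop : Measurable fun g : Fin (m + 1) → ℝ => (∑ i, g i)⁻¹ • g) hE)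
  have hfiber : ∀ᵐ t ∂gammaMeasure (∑ i, β i) 1,
      ∫⁻ w, F.indicator (fun g => ENNReal.ofReal (∑ i, g i)⁻¹) (t • w) ∂dirichlet m β =
        ENNReal.ofReal t⁻¹ * dirichlet m β E := by
    filter_upwards [pos_ae_gammaMeasure _ _] with t ht
    rw [← lintegral_indicator_const hE]
    refine lintegral_congr_ae ?_
    filter_upwards [ae_sum_eq_one_dirichlet m β] with w hw
    have hsum : ∑ i, (t • w) i = t := by simp [← Finset.mul_sum, hw]
    have hmem : t • w ∈ F ↔ w ∈ E := by
      simp only [F, Set.mem_ofPred_eq, hsum, inv_smul_smul₀ ht.ne', ht, true_and]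
    by_cases hwE : w ∈ E
    · rw [indicator_of_mem (hmem.2 hwE), indicator_of_mem hwE, hsum]
    · rw [indicator_of_notMem (hmem.not.2 hwE), indicator_of_notMem hwE]
  rw [← lintegral_indicator hF, lintegral_pi_gammaMeasure hβ
    (hsumMeas.fun_inv.ennreal_ofReal.indicator hF), lintegral_congr_ae hfiber,
    lintegral_mul_const _ (by fun_prop), lintegral_inv_gammaMeasure hβ₁, ← mul_assoc,
    ← ENNReal.ofReal_mul (by linarith), mul_inv_cancel₀ (by linarith), ENNReal.ofReal_one,
    one_mul]

theorem ae_affineMap_ne {E : Type*} [NormedAddCommGroup E] [NormedSpace ℝ E]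
    [MeasurableSpace E] [BorelSpace E] [FiniteDimensional ℝ E] (μ : Measure E)
    [μ.IsAddHaarMeasure] {ℓ : E →ᵃ[ℝ] ℝ} {x y : E} (hxy : ℓ x ≠ ℓ y) (d : ℝ) :
    ∀ᵐ z ∂μ, ℓ z ≠ d := by
  have hmem : ∀ z, z ∈ (affineSpan ℝ {d}).comap ℓ ↔ ℓ z = d := by
    simp [AffineSubspace.mem_comap]
  refine measure_mono_null (fun z hz => (hmem z).2 (not_not.1 hz))
    (Measure.addHaar_affineSubspace μ ((affineSpan ℝ {d}).comap ℓ) fun htop => hxy ?_)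
  rw [(hmem x).1 (htop ▸ AffineSubspace.mem_top ℝ E x),
    (hmem y).1 (htop ▸ AffineSubspace.mem_top ℝ E y)]

theorem ae_sum_mul_ne_dirichlet {f : Fin (m + 1) → ℝ} {i j : Fin (m + 1)} (hf : f i ≠ f j)
    (d : ℝ) : ∀ᵐ w ∂dirichlet m β, ∑ k, f k * w k ≠ d := by
  set ℓ : (Fin m → ℝ) →ᵃ[ℝ] ℝ :=
    (∑ k : Fin m, (f k.castSucc - f (Fin.last m)) • LinearMap.proj k).toAffineMap +
      AffineMap.const ℝ _ (f (Fin.last m))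
  have hℓ : ∀ x, ℓ x = ∑ k, f k * snocWithSum 1 x k := fun x => by
    simp [ℓ, Fin.sum_univ_castSucc, snocWithSum, sub_mul, Finset.sum_sub_distrib, Finset.mul_sum,
      mul_sub]
    ring
  obtain ⟨k, hk⟩ : ∃ k : Fin m, f k.castSucc ≠ f (Fin.last m) := by
    by_contra! h
    have hconst : ∀ k, f k = f (Fin.last m) := Fin.lastCases rfl h
    exact hf ((hconst i).trans (hconst j).symm)
  have hne : ℓ (Pi.single k 1) ≠ ℓ 0 := by
    simpa [ℓ, Pi.single_apply, sub_eq_zero] using hk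
  refine (ae_map_iff (measurable_snocWithSum_right 1).aemeasurable
    (measurableSet_eq_fun (by fun_prop) measurable_const).compl).2
    (Measure.ae_smul_measure ((withDensity_absolutelyContinuous _ _).ae_le ?_) _)
  filter_upwards [ae_affineMap_ne volume hne d] with x hx
  rwa [← hℓ]

theorem dirichlet_le_sum_mul_le {f : Fin (m + 1) → ℝ} {i j : Fin (m + 1)} (hij : f i ≠ f j)
    (hj : ∀ k, f k ≤ f j) (μ : ℝ) :
    dirichlet m β {w | μ ≤ ∑ k, f k * w k} ≤
      dirichlet m β {w | ∑ k, f k * w k ∈ Ioo μ (f j)} := by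
  refine measure_mono_ae ?_
  filter_upwards [ae_mem_stdSimplex_dirichlet m β, ae_sum_mul_ne_dirichlet hij μ,
    ae_sum_mul_ne_dirichlet hij (f j)] with w hw hμ hfj hle
  refine ⟨lt_of_le_of_ne hle hμ.symm, lt_of_le_of_ne ?_ hfj⟩
  calc ∑ k, f k * w k ≤ ∑ k, f j * w k :=
        Finset.sum_le_sum fun k _ => mul_le_mul_of_nonneg_right (hj k) (hw.1 k)
    _ = f j := by rw [← Finset.mul_sum, hw.2, mul_one]

end GammaDirichlet

/-! ### Gaussian smoothing and Fourier inversion -/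

section Smoothing

variable {Ω : Type*} [MeasurableSpace Ω]

theorem gaussianPDFReal_eq_integral_cexp {v : NNReal} (hv : v ≠ 0) (x : ℝ) :
    (gaussianPDFReal 0 v x : ℂ) = (2 * π : ℂ)⁻¹ *
      ∫ s : ℝ, Complex.exp (Complex.I * x * s) * Complex.exp (-(v / 2) * s ^ 2) := by
  have hv' : (0 : ℝ) < v := by positivity
  have hpow : ((π / (v / 2) : ℂ)) ^ (1 / 2 : ℂ) = ((√(2 * π / v) : ℝ) : ℂ) := by
    rw [Real.sqrt_eq_rpow, Complex.ofReal_cpow (by positivity)]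
    push_cast
    congr 1
    field_simp
  have hexp : Complex.exp (-x ^ 2 / (4 * (v / 2))) = ((exp (-(x - 0) ^ 2 / (2 * v)) : ℝ) : ℂ) := by
    push_cast
    congr 1
    ring
  have hconst : (√(2 * π * v))⁻¹ = (2 * π)⁻¹ * √(2 * π / v) := by
    rw [Real.sqrt_div (by positivity), Real.sqrt_mul' _ hv'.le]
    have hπ : √(2 * π) * √(2 * π) = 2 * π := Real.mul_self_sqrt (by positivity)
    field_simp
    linarith
  rw [fourierIntegral_gaussian (by simpa using hv'), hpow, hexp, gaussianPDFReal, hconst]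
  push_cast
  ring

theorem integral_exp_mul_gaussianPDFReal {P : Measure Ω} [SFinite P] {X : Ω → ℝ}
    (hX : AEMeasurable X P) {l : ℝ} (hl : Integrable (fun ω => exp (l * X ω)) P) {v : NNReal}
    (hv : v ≠ 0) :
    ((∫ ω, exp (l * X ω) * gaussianPDFReal 0 v (X ω) ∂P : ℝ) : ℂ) = (2 * π : ℂ)⁻¹ *
      ∫ s : ℝ, Complex.exp (-(v / 2) * s ^ 2) * complexMGF X P (l + s * Complex.I) := by
  have hv' : (0 : ℝ) < v := by positivity
  have hgauss : Integrable fun s : ℝ => Complex.exp (-(v / 2 : ℂ) * s ^ 2) :=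
    integrable_cexp_neg_mul_sq (by simpa using hv')
  have hFubini : Integrable (fun p : Ω × ℝ => Complex.exp (Complex.I * (X p.1) * p.2) *
      ((exp (l * X p.1) : ℝ) * Complex.exp (-(v / 2 : ℂ) * p.2 ^ 2))) (P.prod volume) := by
    refine (hl.ofReal.mul_prod hgauss).bdd_mul (c := 1) ?_ (ae_of_all _ fun p => ?_)
    · exact (by fun_prop : AEMeasurable _ _).aestronglyMeasurable
    · simp [Complex.norm_exp]
  rw [← integral_complex_ofReal]
  calc ∫ ω, ((exp (l * X ω) * gaussianPDFReal 0 v (X ω) : ℝ) : ℂ) ∂P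
      = (2 * π : ℂ)⁻¹ * ∫ ω, (∫ s : ℝ, Complex.exp (Complex.I * (X ω) * s) *
          ((exp (l * X ω) : ℝ) * Complex.exp (-(v / 2 : ℂ) * s ^ 2))) ∂P := by
        rw [← integral_const_mul]
        refine integral_congr_ae (ae_of_all _ fun ω => ?_)
        simp only [Complex.ofReal_mul, gaussianPDFReal_eq_integral_cexp hv, mul_left_comm _
          ((exp (l * X ω) : ℝ) : ℂ), integral_const_mul]
    _ = (2 * π : ℂ)⁻¹ * ∫ s : ℝ, ∫ ω, Complex.exp (Complex.I * (X ω) * s) *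
          ((exp (l * X ω) : ℝ) * Complex.exp (-(v / 2 : ℂ) * s ^ 2)) ∂P := by
        rw [integral_integral_swap hFubini]
    _ = _ := by
        simp only [complexMGF, ← integral_const_mul]
        congr! 5 with s ω
        push_cast
        rw [← Complex.exp_add, ← Complex.exp_add, ← Complex.exp_add]
        ring_nf

theorem lintegral_exp_mul_gaussianPDFReal_le {P : Measure Ω} [SFinite P] {X : Ω → ℝ}
    (hX : AEMeasurable X P) {l : ℝ} (hl : Integrable (fun ω => exp (l * X ω)) P) {v : NNReal}
    (hv : v ≠ 0) :
    ∫⁻ ω, ENNReal.ofReal (exp (l * X ω) * gaussianPDFReal 0 v (X ω)) ∂P ≤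
      ENNReal.ofReal (2 * π)⁻¹ * ∫⁻ s : ℝ, ‖complexMGF X P (l + s * Complex.I)‖ₑ := by
  have hnonneg : ∀ ω, 0 ≤ exp (l * X ω) * gaussianPDFReal 0 v (X ω) :=
    fun ω => mul_nonneg (exp_nonneg _) (gaussianPDFReal_nonneg _ _ _)
  have hInt : Integrable (fun ω => exp (l * X ω) * gaussianPDFReal 0 v (X ω)) P := by
    refine hl.mul_bdd (c := (√(2 * π * v))⁻¹)
      ((measurable_gaussianPDFReal 0 v).comp_aemeasurable hX).aestronglyMeasurable
      (ae_of_all _ fun ω => ?_)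
    rw [Real.norm_of_nonneg (gaussianPDFReal_nonneg _ _ _), gaussianPDFReal]
    refine mul_le_of_le_one_right (by positivity) (Real.exp_le_one_iff.2 ?_)
    exact div_nonpos_of_nonpos_of_nonneg (neg_nonpos.2 (sq_nonneg _)) (by positivity)
  rw [← ofReal_integral_eq_lintegral_ofReal hInt (ae_of_all _ hnonneg),
    ← Real.norm_of_nonneg (integral_nonneg hnonneg), ← Complex.norm_real,
    integral_exp_mul_gaussianPDFReal hX hl hv, ofReal_norm, enorm_mul]
  gcongr
  · rw [← ofReal_norm]
    simp [abs_of_pos pi_pos]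
  · refine (enorm_integral_le_lintegral_enorm _).trans (lintegral_mono fun s => ?_)
    rw [enorm_mul]
    refine mul_le_of_le_one_left' ?_
    have hre : -(v / 2 : ℂ) * s ^ 2 = ((-(v / 2 * s ^ 2) : ℝ) : ℂ) := by push_cast; ring
    rw [← ofReal_norm, ENNReal.ofReal_le_one, hre, ← Complex.ofReal_exp,
      Complex.norm_of_nonneg (exp_nonneg _), Real.exp_le_one_iff, neg_nonpos]
    positivity

theorem complexMGF_pi_sum {ι : Type*} [Fintype ι] (μ : ι → Measure ℝ) [∀ i, SigmaFinite (μ i)]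
    (c : ι → ℝ) (z : ℂ) :
    complexMGF (fun g => ∑ i, c i * g i) (Measure.pi μ) z =
      ∏ i, complexMGF id (μ i) (z * c i) := by
  simp only [complexMGF, ← integral_fintype_prod_eq_prod, ← Complex.exp_sum, id]
  push_cast
  simp only [Finset.mul_sum, mul_assoc]

theorem integrable_exp_sum_pi {ι : Type*} [Fintype ι] (μ : ι → Measure ℝ)
    [∀ i, SigmaFinite (μ i)] (c : ι → ℝ) (l : ℝ)
    (h : ∀ i, Integrable (fun x => exp (l * c i * x)) (μ i)) :
    Integrable (fun g => exp (l * ∑ i, c i * g i)) (Measure.pi μ) := by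
  simp only [Finset.mul_sum, ← mul_assoc, Real.exp_sum]
  exact Integrable.fintype_prod h

theorem mgf_gammaMeasure {a r c : ℝ} (ha : 0 < a) (hr : 0 < r) (hc : c < r) :
    mgf id (gammaMeasure a r) c = (1 - c / r) ^ (-a) := by
  have hΓ := (Gamma_pos_of_pos ha).ne'
  have hrc : 0 < r - c := sub_pos.2 hc
  have hpdf : ∀ x : ℝ, (gammaPDF a r x).toReal • exp (c * x) =
      (Ici 0).indicator (fun x => r ^ a / Gamma a * (x ^ (a - 1) * exp (-((r - c) * x)))) x := by
    intro x
    rw [gammaPDF, ENNReal.toReal_ofReal (gammaPDFReal_nonneg ha hr x), gammaPDFReal]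
    by_cases hx : 0 ≤ x
    · rw [if_pos hx, indicator_of_mem (mem_Ici.2 hx),
        show -((r - c) * x) = -(r * x) + c * x by ring, Real.exp_add, smul_eq_mul]
      ring
    · rw [if_neg hx, indicator_of_notMem (mem_Ici.not.2 hx), zero_smul]
  have hmeas : Measurable (gammaPDF a r) := (measurable_gammaPDFReal a r).ennreal_ofReal
  simp only [mgf, id]
  rw [gammaMeasure, integral_withDensity_eq_integral_toReal_smul hmeas
    (ae_of_all _ fun _ => ENNReal.ofReal_lt_top)]
  simp only [hpdf]
  rw [integral_indicator measurableSet_Ici, integral_Ici_eq_integral_Ioi, integral_const_mul,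
    Real.integral_rpow_mul_exp_neg_mul_Ioi ha hrc, one_sub_div hr.ne',
    Real.rpow_neg (by positivity), Real.div_rpow hrc.le hr.le, Real.div_rpow zero_le_one hrc.le,
    Real.one_rpow]
  field_simp

theorem integrable_exp_mul_gammaMeasure {a r c : ℝ} (ha : 0 < a) (hr : 0 < r) (hc : c < r) :
    Integrable (fun x => exp (c * x)) (gammaMeasure a r) := by
  refine Integrable.of_integral_ne_zero (ne_of_gt ?_)
  exact (Real.rpow_pos_of_pos (sub_pos.2 ((div_lt_one hr).2 hc)) _).trans_eq
    (mgf_gammaMeasure ha hr hc).symm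

theorem complexMGF_gammaMeasure {a r : ℝ} (ha : 0 < a) (hr : 0 < r) {z : ℂ} (hz : z.re < r) :
    complexMGF id (gammaMeasure a r) z = (1 - z / r) ^ (-a : ℂ) := by
  have hexp : Iio r ⊆ interior (integrableExpSet id (gammaMeasure a r)) :=
    interior_maximal (fun c hc => integrable_exp_mul_gammaMeasure ha hr hc) isOpen_Iio
  have hmgf : AnalyticOnNhd ℂ (complexMGF id (gammaMeasure a r)) {z | z.re < r} :=
    analyticOnNhd_complexMGF.mono fun z hz => hexp hz
  have hpow : AnalyticOnNhd ℂ (fun z : ℂ => (1 - z / r) ^ (-a : ℂ)) {z | z.re < r} := by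
    refine fun z hz => AnalyticAt.cpow (by fun_prop) analyticAt_const (Or.inl ?_)
    simpa [Complex.div_ofReal_re, div_lt_one hr] using hz
  have hreal : ∀ c : ℝ, c < r →
      complexMGF id (gammaMeasure a r) c = (1 - (c : ℂ) / r) ^ (-a : ℂ) := fun c hc => by
    rw [complexMGF_ofReal, mgf_gammaMeasure ha hr hc,
      Complex.ofReal_cpow (sub_pos.2 ((div_lt_one hr).2 hc)).le]
    push_cast
    rfl
  have hofReal : Filter.Tendsto ((↑) : ℝ → ℂ) (nhdsWithin 0 {0}ᶜ) (nhdsWithin 0 {0}ᶜ) :=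
    Complex.continuous_ofReal.continuousWithinAt.tendsto_nhdsWithin
      fun x hx => Complex.ofReal_ne_zero.2 hx
  refine hmgf.eqOn_of_preconnected_of_frequently_eq hpow
    (convex_halfSpace_re_lt r).isPreconnected (z₀ := 0) (by simpa using hr) ?_ hz
  refine hofReal.frequently (Filter.Eventually.frequently ?_)
  filter_upwards [nhdsWithin_le_nhds (Iio_mem_nhds hr)] with c hc using hreal c hc

theorem norm_complexMGF_gammaMeasure {a r : ℝ} (ha : 0 < a) (hr : 0 < r) {z : ℂ}
    (hz : z.re < r) : ‖complexMGF id (gammaMeasure a r) z‖ = ‖1 - z / r‖ ^ (-a) := by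
  rw [complexMGF_gammaMeasure ha hr hz, ← Complex.ofReal_neg, Complex.norm_cpow_real]

theorem enorm_complexMGF_pi_gammaMeasure {ι : Type*} [Fintype ι] {β c : ι → ℝ}
    (hβ : ∀ i, 0 < β i) {l : ℝ} (hl : ∀ i, l * c i < 1) (s : ℝ) :
    ‖complexMGF (fun g => ∑ i, c i * g i) (Measure.pi fun i => gammaMeasure (β i) 1)
      (l + s * Complex.I)‖ₑ =
        ENNReal.ofReal (∏ i, ‖1 - (l + s * Complex.I) * c i‖ ^ (-β i)) := by
  have hγ : ∀ i, IsProbabilityMeasure (gammaMeasure (β i) 1) :=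
    fun i => isProbabilityMeasure_gammaMeasure (hβ i) one_pos
  have hre : ∀ i, ((l + s * Complex.I) * c i).re < 1 := fun i => by
    simpa [Complex.re_mul_ofReal] using hl i
  simp only [complexMGF_pi_sum, ← ofReal_norm, norm_prod,
    norm_complexMGF_gammaMeasure (hβ _) one_pos (hre _), Complex.ofReal_one, div_one]

end Smoothing

/-! ### Passing to the limit in the smoothing -/

section ApproximateIdentity

theorem gaussianPDFReal_zero_one_inv_mul {τ : NNReal} (hτ : τ ≠ 0) (x : ℝ) :
    gaussianPDFReal 0 1 ((τ : ℝ)⁻¹ * x) = τ * gaussianPDFReal 0 (τ ^ 2) x := by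
  rw [gaussianPDFReal_inv_mul (NNReal.coe_ne_zero.2 hτ), mul_zero, mul_one, NNReal.abs_eq]
  congr

theorem lintegral_gaussianPDF_mul {c : ℝ} (hc : c ≠ 0) :
    ∫⁻ y, gaussianPDF 0 1 (c * y) = ENNReal.ofReal |c|⁻¹ := by
  have h := lintegral_eq_mul_lintegral_comp_smul volume (gaussianPDF 0 1) hc
  simp only [Module.finrank_self, pow_one, smul_eq_mul,
    lintegral_gaussianPDF_eq_one 0 one_ne_zero] at h
  rw [ENNReal.ofReal_inv_of_pos (abs_pos.2 hc)]
  exact ENNReal.eq_inv_of_mul_eq_one_left (by rw [mul_comm, ← h])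

theorem tendsto_mul_gaussianPDFReal {v₁ c : ℝ} {ψ : ℝ → ℝ} {τ : ℕ → NNReal} (hψ₀ : ψ v₁ = 0)
    (hψ₁ : HasDerivAt ψ c v₁) (hτ₀ : ∀ n, τ n ≠ 0) (hτ : Filter.Tendsto τ Filter.atTop (nhds 0))
    (y : ℝ) :
    Filter.Tendsto (fun n => τ n * gaussianPDFReal 0 (τ n ^ 2) (ψ (v₁ + τ n * y))) Filter.atTop
      (nhds (gaussianPDFReal 0 1 (c * y))) := by
  have hderiv : HasDerivAt (fun t => ψ (v₁ + t * y)) (c * y) 0 := by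
    refine HasDerivAt.comp (0 : ℝ) (by simpa using hψ₁) ?_
    simpa using ((hasDerivAt_id (0 : ℝ)).mul_const y).const_add v₁
  have hne : Filter.Tendsto (fun n => (τ n : ℝ)) Filter.atTop (nhdsWithin 0 {0}ᶜ) :=
    tendsto_nhdsWithin_iff.2 ⟨NNReal.tendsto_coe.2 hτ, Filter.Eventually.of_forall fun n =>
      NNReal.coe_ne_zero.2 (hτ₀ n)⟩
  have hslope : Filter.Tendsto (fun n => (τ n : ℝ)⁻¹ * ψ (v₁ + τ n * y)) Filter.atTop
      (nhds (c * y)) := by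
    simpa [hψ₀, Function.comp_def] using hderiv.tendsto_slope_zero.comp hne
  have hcont : Continuous (gaussianPDFReal 0 1) := by
    unfold gaussianPDFReal
    fun_prop
  simpa only [Function.comp_def, gaussianPDFReal_zero_one_inv_mul (hτ₀ _)] using
    (hcont.tendsto _).comp hslope

theorem le_liminf_lintegral_gaussianPDFReal {J : Set ℝ} {v₁ c : ℝ} {h ψ : ℝ → ℝ} {τ : ℕ → NNReal}
    (hJm : MeasurableSet J) (hJ : J ∈ nhds v₁) (hh : Measurable h) (hh₁ : ContinuousAt h v₁)
    (hψ : Measurable ψ) (hψ₀ : ψ v₁ = 0) (hψ₁ : HasDerivAt ψ c v₁) (hc : c ≠ 0)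
    (hτ₀ : ∀ n, τ n ≠ 0) (hτ : Filter.Tendsto τ Filter.atTop (nhds 0)) :
    ENNReal.ofReal (h v₁ / |c|) ≤ Filter.liminf (fun n => ∫⁻ v in J,
      ENNReal.ofReal (h v * gaussianPDFReal 0 (τ n ^ 2) (ψ v))) Filter.atTop := by
  have hτ' : Filter.Tendsto (fun n => (τ n : ℝ)) Filter.atTop (nhds 0) :=
    NNReal.tendsto_coe.2 hτ
  set F : ℕ → ℝ → ℝ≥0∞ := fun n => J.indicator fun v =>
    ENNReal.ofReal (h v * gaussianPDFReal 0 (τ n ^ 2) (ψ v)) with hF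
  have hFm : ∀ n, Measurable (F n) := fun n =>
    (hh.mul ((measurable_gaussianPDFReal _ _).comp hψ)).ennreal_ofReal.indicator hJm
  have hsubst : ∀ n, ∫⁻ v in J, ENNReal.ofReal (h v * gaussianPDFReal 0 (τ n ^ 2) (ψ v)) =
      ∫⁻ y, ENNReal.ofReal (τ n) * F n (v₁ + τ n * y) := fun n => by
    rw [← lintegral_indicator hJm, ← lintegral_add_left_eq_self _ v₁,
      lintegral_eq_mul_lintegral_comp_smul volume _ (NNReal.coe_ne_zero.2 (hτ₀ n)),
      lintegral_const_mul' _ _ ENNReal.ofReal_ne_top]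
    simp [hF]
  have hlim : ∀ y, Filter.Tendsto (fun n => ENNReal.ofReal (τ n) * F n (v₁ + τ n * y)) Filter.atTop
      (nhds (ENNReal.ofReal (h v₁) * gaussianPDF 0 1 (c * y))) := by
    intro y
    have hv : Filter.Tendsto (fun n => v₁ + τ n * y) Filter.atTop (nhds v₁) := by
      simpa using (hτ'.mul_const y).const_add v₁
    rw [gaussianPDF, ← ENNReal.ofReal_mul' (gaussianPDFReal_nonneg _ _ _)]
    refine (ENNReal.tendsto_ofReal
      ((hh₁.tendsto.comp hv).mul (tendsto_mul_gaussianPDFReal hψ₀ hψ₁ hτ₀ hτ y))).congr' ?_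
    filter_upwards [hv.eventually_mem hJ] with n hn
    simp only [hF, indicator_of_mem hn, ← ENNReal.ofReal_mul (τ n).coe_nonneg,
      Function.comp_apply, mul_left_comm]
  calc ENNReal.ofReal (h v₁ / |c|)
      = ∫⁻ y, ENNReal.ofReal (h v₁) * gaussianPDF 0 1 (c * y) := by
        rw [lintegral_const_mul' _ _ ENNReal.ofReal_ne_top, lintegral_gaussianPDF_mul hc,
          div_eq_mul_inv, ENNReal.ofReal_mul' (by positivity)]
    _ = ∫⁻ y, Filter.liminf (fun n => ENNReal.ofReal (τ n) * F n (v₁ + τ n * y)) Filter.atTop :=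
        lintegral_congr fun y => (hlim y).liminf_eq.symm
    _ ≤ _ := by
        simp only [hsubst]
        exact lintegral_liminf_le fun n => ((hFm n).comp (by fun_prop)).const_mul _

theorem ofReal_inv_le_liminf_lintegral_gaussianPDFReal {J : Set ℝ} {φ φ' l : ℝ → ℝ} {v₁ y t : ℝ}
    {τ : ℕ → NNReal} (hJm : MeasurableSet J) (hJ : J ∈ nhds v₁) (hφ : Measurable φ)
    (hφm : Measurable φ') (hl : Measurable l) (hφd : HasDerivAt φ (φ' v₁) v₁) (hφ₀ : φ' v₁ ≠ 0)
    (hφc : ContinuousAt φ' v₁) (hlc : ContinuousAt l v₁) (ht : 0 < t) (hy : y / t = φ v₁)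
    (hτ₀ : ∀ n, τ n ≠ 0) (hτ : Filter.Tendsto τ Filter.atTop (nhds 0)) :
    ENNReal.ofReal t⁻¹ ≤ Filter.liminf (fun n => ∫⁻ v in J, ENNReal.ofReal (|φ' v| *
      exp (l v * (y - φ v * t)) * gaussianPDFReal 0 (τ n ^ 2) (y - φ v * t))) Filter.atTop := by
  have hy' : y - φ v₁ * t = 0 := sub_eq_zero.2 ((div_eq_iff ht.ne').1 hy)
  have hψ : HasDerivAt (fun v => y - φ v * t) (-(φ' v₁ * t)) v₁ :=
    (hφd.mul_const t).const_sub y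
  have hφ₁ := hφd.continuousAt
  have h := le_liminf_lintegral_gaussianPDFReal
    (h := fun v => |φ' v| * exp (l v * (y - φ v * t))) hJm hJ (by fun_prop) (by fun_prop)
    (by fun_prop) hy' hψ (neg_ne_zero.2 (mul_ne_zero hφ₀ ht.ne')) hτ₀ hτ
  simp only [hy', mul_zero, Real.exp_zero, mul_one, abs_neg, abs_mul, abs_of_pos ht] at h
  rwa [div_mul_cancel_left₀ (abs_ne_zero.2 hφ₀)] at h

theorem setLIntegral_inv_le_lintegral_complexMGF {Ω : Type*} [MeasurableSpace Ω] {P : Measure Ω}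
    [SFinite P] {Y T : Ω → ℝ} (hY : Measurable Y) (hT : Measurable T) {J E : Set ℝ}
    (hJ : IsOpen J) {φ φ' l : ℝ → ℝ} (hφ : Measurable φ) (hφm : Measurable φ') (hl : Measurable l)
    (hφd : ∀ v ∈ J, HasDerivAt φ (φ' v) v) (hφ₀ : ∀ v ∈ J, φ' v ≠ 0) (hφc : ContinuousOn φ' J)
    (hlc : ContinuousOn l J)
    (hint : ∀ v ∈ J, Integrable (fun ω => exp (l v * (Y ω - φ v * T ω))) P)
    (hE : MeasurableSet E) (hEφ : E ⊆ φ '' J) :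
    ∫⁻ ω in {ω | 0 < T ω ∧ Y ω / T ω ∈ E}, ENNReal.ofReal (T ω)⁻¹ ∂P ≤
      ∫⁻ v in J, ENNReal.ofReal |φ' v| * (ENNReal.ofReal (2 * π)⁻¹ *
        ∫⁻ s : ℝ, ‖complexMGF (fun ω => Y ω - φ v * T ω) P (l v + s * Complex.I)‖ₑ) := by
  set τ : ℕ → NNReal := fun n => ((n : NNReal) + 1)⁻¹
  have hτ₀ : ∀ n, τ n ≠ 0 := fun n => by positivity
  have hτ : Filter.Tendsto τ Filter.atTop (nhds 0) := by
    simpa [τ] using tendsto_one_div_add_atTop_nhds_zero_nat (𝕜 := NNReal)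
  set F : ℕ → Ω → ℝ → ℝ≥0∞ := fun n ω v => ENNReal.ofReal (|φ' v| *
    exp (l v * (Y ω - φ v * T ω)) * gaussianPDFReal 0 (τ n ^ 2) (Y ω - φ v * T ω)) with hF
  have hFm : ∀ n, Measurable (Function.uncurry (F n)) := fun n => by
    simp only [hF, Function.uncurry_def]
    fun_prop
  have hpoint : ∀ ω, 0 < T ω → Y ω / T ω ∈ E →
      ENNReal.ofReal (T ω)⁻¹ ≤ Filter.liminf (fun n => ∫⁻ v in J, F n ω v) Filter.atTop := by
    intro ω hTω hω
    obtain ⟨v₁, hv₁, hφv⟩ := hEφ hω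
    have hJv := hJ.mem_nhds hv₁
    exact ofReal_inv_le_liminf_lintegral_gaussianPDFReal hJ.measurableSet hJv hφ hφm hl
      (hφd v₁ hv₁) (hφ₀ v₁ hv₁) (hφc.continuousAt hJv) (hlc.continuousAt hJv) hTω hφv.symm hτ₀ hτ
  have hsmooth : ∀ n, ∫⁻ ω, (∫⁻ v in J, F n ω v) ∂P ≤
      ∫⁻ v in J, ENNReal.ofReal |φ' v| * (ENNReal.ofReal (2 * π)⁻¹ *
        ∫⁻ s : ℝ, ‖complexMGF (fun ω => Y ω - φ v * T ω) P (l v + s * Complex.I)‖ₑ) := by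
    intro n
    rw [lintegral_lintegral_swap (hFm n).aemeasurable]
    refine setLIntegral_mono' hJ.measurableSet fun v hv => ?_
    simp only [hF, mul_assoc, ENNReal.ofReal_mul (abs_nonneg (φ' v))]
    rw [lintegral_const_mul' _ _ ENNReal.ofReal_ne_top]
    gcongr
    exact lintegral_exp_mul_gaussianPDFReal_le (by fun_prop) (hint v hv) (pow_ne_zero 2 (hτ₀ n))
  calc ∫⁻ ω in {ω | 0 < T ω ∧ Y ω / T ω ∈ E}, ENNReal.ofReal (T ω)⁻¹ ∂P
      ≤ ∫⁻ ω in {ω | 0 < T ω ∧ Y ω / T ω ∈ E},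
          Filter.liminf (fun n => ∫⁻ v in J, F n ω v) Filter.atTop ∂P :=
        setLIntegral_mono' ((measurableSet_lt measurable_const hT).inter (hY.div hT hE))
          fun ω hω => hpoint ω hω.1 hω.2
    _ ≤ ∫⁻ ω, Filter.liminf (fun n => ∫⁻ v in J, F n ω v) Filter.atTop ∂P :=
        setLIntegral_le_lintegral _ _
    _ ≤ Filter.liminf (fun n => ∫⁻ ω, (∫⁻ v in J, F n ω v) ∂P) Filter.atTop :=
        lintegral_liminf_le fun n => (hFm n).lintegral_prod_right'
    _ ≤ _ := Filter.liminf_le_of_le (by isBoundedDefault) fun b hb =>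
        (hb.exists).elim fun n hn => hn.trans (hsmooth n)

theorem dirichlet_sum_mul_mem_le {m : ℕ} {f β : Fin (m + 1) → ℝ} (hβ : ∀ i, 0 < β i)
    (hβ₁ : 1 < ∑ i, β i) {J E : Set ℝ} (hJ : IsOpen J) {φ φ' l : ℝ → ℝ} (hφ : Measurable φ)
    (hφm : Measurable φ') (hl : Measurable l) (hφd : ∀ v ∈ J, HasDerivAt φ (φ' v) v)
    (hφ₀ : ∀ v ∈ J, φ' v ≠ 0) (hφc : ContinuousOn φ' J) (hlc : ContinuousOn l J)
    (hlt : ∀ v ∈ J, ∀ i, l v * (f i - φ v) < 1) (hE : MeasurableSet E) (hEφ : E ⊆ φ '' J) :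
    dirichlet m β {w | ∑ i, f i * w i ∈ E} ≤ ENNReal.ofReal (∑ i, β i - 1) *
      ∫⁻ v in J, ENNReal.ofReal |φ' v| * (ENNReal.ofReal (2 * π)⁻¹ * ∫⁻ s : ℝ,
        ENNReal.ofReal (∏ i, ‖1 - (l v + s * Complex.I) * (f i - φ v : ℝ)‖ ^ (-β i))) := by
  have hγ : ∀ i, IsProbabilityMeasure (gammaMeasure (β i) 1) :=
    fun i => isProbabilityMeasure_gammaMeasure (hβ i) one_pos
  have hlin : ∀ (v : ℝ) (g : Fin (m + 1) → ℝ),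
      ∑ i, f i * g i - φ v * ∑ i, g i = ∑ i, (f i - φ v) * g i := fun v g => by
    simp only [Finset.mul_sum, sub_mul, Finset.sum_sub_distrib]
  have hscale : ∀ g : Fin (m + 1) → ℝ,
      ∑ i, f i * ((∑ j, g j)⁻¹ • g) i = (∑ i, f i * g i) / ∑ i, g i := fun g => by
    simp only [Pi.smul_apply, smul_eq_mul, div_eq_inv_mul, Finset.mul_sum, mul_left_comm]
  have hint : ∀ v ∈ J, Integrable (fun g => exp (l v * (∑ i, f i * g i - φ v * ∑ i, g i)))
      (Measure.pi fun i => gammaMeasure (β i) 1) := fun v hv => by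
    simp only [hlin]
    exact integrable_exp_sum_pi _ _ _ fun i =>
      integrable_exp_mul_gammaMeasure (hβ i) one_pos (hlt v hv i)
  have hmeas : Measurable fun w : Fin (m + 1) → ℝ => ∑ i, f i * w i := by fun_prop
  have hEm : MeasurableSet {w : Fin (m + 1) → ℝ | ∑ i, f i * w i ∈ E} := hmeas hE
  rw [dirichlet_eq_lintegral_pi_gammaMeasure hβ hβ₁ hEm]
  simp only [mem_ofPred_eq, hscale]
  gcongr
  refine (setLIntegral_inv_le_lintegral_complexMGF hmeas (by fun_prop) hJ hφ hφm hl hφd hφ₀ hφc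
    hlc hint hE hEφ).trans_eq (setLIntegral_congr_fun hJ.measurableSet fun v hv => ?_)
  simp only [hlin, enorm_complexMGF_pi_gammaMeasure hβ (hlt v hv)]

end ApproximateIdentity

/-! ### Student integrals -/

section Student

theorem lintegral_one_add_mul_sq_rpow_neg {a k : ℝ} (ha : 0 < a) (hk : 1 / 2 < k) :
    ∫⁻ s : ℝ, ENNReal.ofReal ((1 + a * s ^ 2) ^ (-k)) =
      ENNReal.ofReal (√(π / a) * (Gamma (k - 1 / 2) / Gamma k)) := by
  have hk₀ : 0 < k := by linarith
  have : IsProbabilityMeasure (gammaMeasure k 1) := isProbabilityMeasure_gammaMeasure hk₀ one_pos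
  have hmgf : ∀ s : ℝ, ENNReal.ofReal ((1 + a * s ^ 2) ^ (-k)) =
      ∫⁻ t, ENNReal.ofReal (exp (-(a * t) * s ^ 2)) ∂gammaMeasure k 1 := fun s => by
    have hs : -(a * s ^ 2) < 1 := by nlinarith [mul_nonneg ha.le (sq_nonneg s)]
    have h := mgf_gammaMeasure hk₀ one_pos hs
    rw [div_one, sub_neg_eq_add] at h
    simp only [← h, mgf, id]
    rw [ofReal_integral_eq_lintegral_ofReal
      (integrable_exp_mul_gammaMeasure hk₀ one_pos hs) (ae_of_all _ fun t => exp_nonneg _)]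
    simp only [neg_mul, mul_right_comm]
  have hgauss : ∀ᵐ t ∂gammaMeasure k 1, ∫⁻ s : ℝ, ENNReal.ofReal (exp (-(a * t) * s ^ 2)) =
      ENNReal.ofReal √(π / a) * ENNReal.ofReal (t ^ (-(1 / 2) : ℝ)) := by
    filter_upwards [pos_ae_gammaMeasure k 1] with t ht
    rw [← ofReal_integral_eq_lintegral_ofReal (integrable_exp_neg_mul_sq (mul_pos ha ht))
      (ae_of_all _ fun s => exp_nonneg _), integral_gaussian, ← ENNReal.ofReal_mul (by positivity),
      Real.rpow_neg ht.le, ← Real.sqrt_eq_rpow, ← Real.sqrt_inv, ← Real.sqrt_mul (by positivity),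
      ← div_eq_mul_inv, div_div]
  simp only [hmgf]
  rw [lintegral_lintegral_swap (by fun_prop), lintegral_congr_ae hgauss,
    lintegral_const_mul' _ _ ENNReal.ofReal_ne_top,
    lintegral_rpow_gammaMeasure hk₀ (by linarith), ← ENNReal.ofReal_mul (by positivity),
    ← sub_eq_add_neg]

theorem Gamma_sub_half_div_Gamma_le {k : ℝ} (hk : 1 / 2 < k) :
    Gamma (k - 1 / 2) / Gamma k ≤ √k / (k - 1 / 2) := by
  have hk₀ : 0 < k := by linarith
  have hk₁ : 0 < k - 1 / 2 := by linarith
  have hΓ := Gamma_pos_of_pos hk₀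
  have hstep : Gamma (1 / 2 * k + 1 / 2 * (k + 1)) = (k - 1 / 2) * Gamma (k - 1 / 2) := by
    rw [← Real.Gamma_add_one hk₁.ne']
    ring_nf
  have hconvex := Real.Gamma_mul_add_mul_le_rpow_Gamma_mul_rpow_Gamma hk₀ (by linarith : 0 < k + 1)
    one_half_pos one_half_pos (add_halves 1)
  rw [hstep, Real.Gamma_add_one hk₀.ne', ← Real.sqrt_eq_rpow, ← Real.sqrt_eq_rpow,
    Real.sqrt_mul hk₀.le, mul_left_comm, Real.mul_self_sqrt hΓ.le] at hconvex
  rw [div_le_div_iff₀ hΓ hk₁]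
  linarith

theorem lintegral_one_add_mul_sq_rpow_neg_le {a n ε : ℝ} (ha : 0 < a) (hε : 0 < ε)
    (hn : 1 + 1 / ε ≤ n) :
    ∫⁻ s : ℝ, ENNReal.ofReal ((1 + a * s ^ 2) ^ (-(n / 2))) ≤
      ENNReal.ofReal ((1 + ε) * √(2 * π / (n * a))) := by
  have hn₁ : 1 < n := (lt_add_of_pos_right 1 (by positivity)).trans_le hn
  have hεn : n ≤ (1 + ε) * (n - 1) := by
    have := (div_le_iff₀ hε).1 (le_sub_iff_add_le'.2 hn)
    linarith
  rw [lintegral_one_add_mul_sq_rpow_neg ha (by linarith)]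
  refine ENNReal.ofReal_le_ofReal ?_
  calc √(π / a) * (Gamma (n / 2 - 1 / 2) / Gamma (n / 2))
      ≤ √(π / a) * (√(n / 2) / (n / 2 - 1 / 2)) := by
        exact mul_le_mul_of_nonneg_left (Gamma_sub_half_div_Gamma_le (by linarith))
          (Real.sqrt_nonneg _)
    _ = n / (n - 1) * √(2 * π / (n * a)) := by
        have hsqrt : √(2 * π / (n * a)) = √(π / a) / √(n / 2) := by
          rw [← Real.sqrt_div (by positivity)]
          congr 1
          field_simp
        have hnn : √(n / 2) * √(n / 2) = n / 2 := Real.mul_self_sqrt (by positivity)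
        have : n - 1 ≠ 0 := by linarith
        rw [hsqrt]
        field_simp
        linarith
    _ ≤ (1 + ε) * √(2 * π / (n * a)) := by
        gcongr
        rwa [div_le_iff₀ (by linarith)]

theorem norm_one_sub_add_mul_I_rpow_neg {l c : ℝ} (hlc : l * c < 1) (s β : ℝ) :
    ‖1 - ((l : ℂ) + s * Complex.I) * c‖ ^ (-β) =
      (1 - l * c) ^ (-β) * (1 + (c / (1 - l * c)) ^ 2 * s ^ 2) ^ (-(β / 2)) := by
  have hx : 0 < 1 - l * c := sub_pos.2 hlc
  have hre : 1 - ((l : ℂ) + s * Complex.I) * c =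
      ((1 - l * c : ℝ) : ℂ) + ((-(s * c) : ℝ) : ℂ) * Complex.I := by
    push_cast
    ring
  have hsq : (1 - l * c) ^ 2 + (-(s * c)) ^ 2 =
      (1 - l * c) ^ 2 * (1 + (c / (1 - l * c)) ^ 2 * s ^ 2) := by
    field_simp
  rw [hre, Complex.norm_add_mul_I, hsq, Real.sqrt_mul (by positivity), Real.sqrt_sq hx.le,
    Real.sqrt_eq_rpow, Real.mul_rpow hx.le (by positivity), ← Real.rpow_mul (by positivity)]
  ring_nf

theorem prod_one_add_mul_rpow_neg_le {ι : Type*} [Fintype ι] {α β a : ι → ℝ} {A t : ℝ}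
    (hα : ∀ i, 0 ≤ α i) (hαβ : ∀ i, α i ≤ β i) (ha : ∀ i, 0 ≤ a i) (haA : ∀ i, a i ≤ A)
    (hA : 0 < A) (ht : 0 ≤ t) :
    ∏ i, (1 + a i * t) ^ (-β i) ≤ (1 + A * t) ^ (-((∑ i, α i * a i) / A)) := by
  have hAt : 0 < 1 + A * t := by positivity
  rw [Finset.sum_div, ← Finset.sum_neg_distrib, Real.rpow_sum_of_pos hAt]
  refine Finset.prod_le_prod (fun i _ => ?_) fun i _ => ?_
  · have := ha i
    positivity
  have hai := mul_nonneg (ha i) ht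
  have bernoulli : (1 + A * t) ^ (a i / A) ≤ 1 + a i * t := by
    have := rpow_one_add_le_one_add_mul_self (s := A * t) (by nlinarith)
      (div_nonneg (ha i) hA.le) ((div_le_one hA).2 (haA i))
    rwa [← mul_assoc, div_mul_cancel₀ _ hA.ne'] at this
  calc (1 + a i * t) ^ (-β i) ≤ (1 + a i * t) ^ (-α i) :=
        Real.rpow_le_rpow_of_exponent_le (by linarith) (neg_le_neg (hαβ i))
    _ ≤ ((1 + A * t) ^ (a i / A)) ^ (-α i) :=
        Real.rpow_le_rpow_of_nonpos (by positivity) bernoulli (neg_nonpos.2 (hα i))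
    _ = (1 + A * t) ^ (-(α i * a i / A)) := by
        rw [← Real.rpow_mul hAt.le]
        ring_nf

theorem lintegral_prod_norm_rpow_neg_le {ι : Type*} [Fintype ι] {α β c : ι → ℝ} {l ε : ℝ} {j : ι}
    (hα : ∀ i, 0 < α i) (hαβ : ∀ i, α i ≤ β i) (hc : ∀ i, l * c i < 1)
    (hj : ∀ i, |c i / (1 - l * c i)| ≤ |c j / (1 - l * c j)|) (hcj : c j ≠ 0) (hε : 0 < ε)
    (hαj : 1 + 1 / ε ≤ α j) :
    ∫⁻ s : ℝ, ENNReal.ofReal (∏ i, ‖1 - ((l : ℂ) + s * Complex.I) * c i‖ ^ (-β i)) ≤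
      ENNReal.ofReal ((∏ i, (1 - l * c i) ^ (-β i)) *
        ((1 + ε) * √(2 * π / ∑ i, α i * (c i / (1 - l * c i)) ^ 2))) := by
  have hx i : 0 < 1 - l * c i := sub_pos.2 (hc i)
  set a : ι → ℝ := fun i => (c i / (1 - l * c i)) ^ 2
  have ha i : 0 ≤ a i := sq_nonneg _
  have haj : 0 < a j := sq_pos_of_ne_zero (div_ne_zero hcj (hx j).ne')
  have hprod : 0 ≤ ∏ i, (1 - l * c i) ^ (-β i) :=
    Finset.prod_nonneg fun i _ => (Real.rpow_pos_of_pos (hx i) _).le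
  set n : ℝ := (∑ i, α i * a i) / a j
  have hn : 1 + 1 / ε ≤ n := hαj.trans <| (le_div_iff₀ haj).2 <|
    Finset.single_le_sum (f := fun i => α i * a i) (fun i _ => mul_nonneg (hα i).le (ha i))
      (Finset.mem_univ j)
  have hpointwise (s : ℝ) : ∏ i, ‖1 - ((l : ℂ) + s * Complex.I) * c i‖ ^ (-β i) ≤
      (∏ i, (1 - l * c i) ^ (-β i)) * (1 + a j * s ^ 2) ^ (-(n / 2)) := by
    simp only [norm_one_sub_add_mul_I_rpow_neg (hc _), Finset.prod_mul_distrib]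
    refine mul_le_mul_of_nonneg_left ?_ hprod
    have h := prod_one_add_mul_rpow_neg_le (α := fun i => α i / 2) (β := fun i => β i / 2)
      (fun i => by linarith [hα i]) (fun i => by linarith [hαβ i]) ha
      (fun i => sq_le_sq.2 (hj i)) haj (sq_nonneg s)
    simpa only [div_mul_eq_mul_div, ← Finset.sum_div, div_right_comm _ (2 : ℝ)] using h
  calc _ ≤ ∫⁻ s : ℝ, ENNReal.ofReal (∏ i, (1 - l * c i) ^ (-β i)) *
          ENNReal.ofReal ((1 + a j * s ^ 2) ^ (-(n / 2))) := by
        refine lintegral_mono fun s => ?_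
        rw [← ENNReal.ofReal_mul hprod]
        exact ENNReal.ofReal_le_ofReal (hpointwise s)
    _ ≤ ENNReal.ofReal (∏ i, (1 - l * c i) ^ (-β i)) *
          ENNReal.ofReal ((1 + ε) * √(2 * π / (n * a j))) := by
        rw [lintegral_const_mul' _ _ ENNReal.ofReal_ne_top]
        gcongr
        exact lintegral_one_add_mul_sq_rpow_neg_le haj hε hn
    _ = _ := by rw [← ENNReal.ofReal_mul hprod, div_mul_cancel₀ _ haj.ne']

end Student

/-! ### The dual parametrization of `Kinf` -/

section Dual

theorem two_mul_mul_log_le {x M : ℝ} (hx : 0 < x) (hxM : x ≤ M) (hM : 1 ≤ M) :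
    2 * x * (x * log x - x + 1) ≤ M ^ 2 * (x - 1) ^ 2 := by
  have hM₂ : M ≤ M ^ 2 := le_self_pow₀ hM two_ne_zero
  suffices 2 * x * (x * log x - x + 1) ≤ max 1 x * (x - 1) ^ 2 from
    this.trans (mul_le_mul_of_nonneg_right ((max_le hM hxM).trans hM₂) (sq_nonneg _))
  rcases le_total x 1 with h | h
  · have hlog : log x ≤ 2 * (x - 1) / (x + 1) := by
      have := Real.le_log_one_add_of_nonneg (sub_nonneg.2 ((one_le_inv₀ hx).2 h))
      rw [add_sub_cancel, Real.log_inv] at this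
      calc log x ≤ -(2 * (x⁻¹ - 1) / (x⁻¹ - 1 + 2)) := by linarith
        _ = 2 * (x - 1) / (x + 1) := by field_simp; ring
    rw [le_div_iff₀ (by linarith)] at hlog
    rw [max_eq_left h, one_mul]
    refine le_of_mul_le_mul_right ?_ (by linarith : 0 < x + 1)
    have := mul_le_mul_of_nonneg_left hlog (sq_nonneg x)
    nlinarith [mul_nonneg (sub_nonneg.2 h) (sq_nonneg (x - 1))]
  · have hlog : 2 * log x ≤ x - x⁻¹ := by
      have := Real.self_le_sinh_iff.2 (Real.log_nonneg h)
      rw [Real.sinh_log hx] at this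
      linarith
    have := mul_le_mul_of_nonneg_left hlog (sq_nonneg x)
    rw [max_eq_right h]
    calc 2 * x * (x * log x - x + 1) = x ^ 2 * (2 * log x) - 2 * x ^ 2 + 2 * x := by ring
      _ ≤ x ^ 2 * (x - x⁻¹) - 2 * x ^ 2 + 2 * x := by gcongr
      _ = x * (x - 1) ^ 2 := by field_simp; ring

variable {ι : Type*} [Fintype ι] {p f : ι → ℝ} {v : ℝ}

/-- The multiplier `λ = ∑ pᵢ / (v - fᵢ)` of the constraint in the minimization defining `Kinf`.
The minimizers `q` are parametrized by `v > max f`, through `qᵢ = pᵢ / (λ (v - fᵢ))`. -/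
def dualSlope (p f : ι → ℝ) (v : ℝ) : ℝ := ∑ i, p i / (v - f i)

/-- The mean `qf` of the minimizer `q` with parameter `v`. -/
def dualLevel (p f : ι → ℝ) (v : ℝ) : ℝ := v - (dualSlope p f v)⁻¹

/-- The derivative of `dualLevel p f`. -/
def dualLevelDeriv (p f : ι → ℝ) (v : ℝ) : ℝ :=
  1 - (∑ i, p i / (v - f i) ^ 2) / dualSlope p f v ^ 2

/-- The likelihood ratio `pᵢ / qᵢ` for the minimizer `q` with parameter `v`. -/
def dualRatio (p f : ι → ℝ) (v : ℝ) (i : ι) : ℝ := dualSlope p f v * (v - f i)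

/-- The divergence `KL(p, q)` of the minimizer `q` with parameter `v`. -/
def dualValue (p f : ι → ℝ) (v : ℝ) : ℝ := ∑ i, p i * log (dualRatio p f v i)

theorem dualSlope_pos [Nonempty ι] (hp : ∀ i, 0 < p i) (hv : ∀ i, f i < v) :
    0 < dualSlope p f v :=
  Finset.sum_pos (fun i _ => div_pos (hp i) (sub_pos.2 (hv i))) Finset.univ_nonempty

theorem dualRatio_pos (hp : ∀ i, 0 < p i) (hv : ∀ i, f i < v) (i : ι) : 0 < dualRatio p f v i :=
  have : Nonempty ι := ⟨i⟩
  mul_pos (dualSlope_pos hp hv) (sub_pos.2 (hv i))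

theorem one_sub_dualSlope_mul (hp : ∀ i, 0 < p i) (hv : ∀ i, f i < v) (i : ι) :
    1 - dualSlope p f v * (f i - dualLevel p f v) = dualRatio p f v i := by
  have : Nonempty ι := ⟨i⟩
  have := (dualSlope_pos hp hv).ne'
  rw [dualLevel, dualRatio]
  field_simp
  ring

theorem sub_dualLevel_div_dualRatio (hp : ∀ i, 0 < p i) (hv : ∀ i, f i < v) (i : ι) :
    (f i - dualLevel p f v) / dualRatio p f v i =
      ((dualRatio p f v i)⁻¹ - 1) / dualSlope p f v := by
  have : Nonempty ι := ⟨i⟩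
  have hl := (dualSlope_pos hp hv).ne'
  have hx := (dualRatio_pos hp hv i).ne'
  have := one_sub_dualSlope_mul hp hv i
  field_simp
  linarith

theorem sum_div_dualRatio [Nonempty ι] (hp : ∀ i, 0 < p i) (hv : ∀ i, f i < v) :
    ∑ i, p i / dualRatio p f v i = 1 := by
  simp only [dualRatio, mul_comm (dualSlope p f v), ← div_div, ← Finset.sum_div]
  exact div_self (dualSlope_pos hp hv).ne'

theorem sum_mul_div_dualRatio [Nonempty ι] (hp : ∀ i, 0 < p i) (hp₁ : ∑ i, p i = 1)
    (hv : ∀ i, f i < v) : ∑ i, f i * (p i / dualRatio p f v i) = dualLevel p f v := by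
  have hterm i : f i * (p i / dualRatio p f v i) =
      v * (p i / dualRatio p f v i) - p i * (dualSlope p f v)⁻¹ := by
    have := (sub_pos.2 (hv i)).ne'
    have := (dualSlope_pos hp hv).ne'
    rw [dualRatio]
    field_simp
    ring
  simp only [hterm, Finset.sum_sub_distrib, ← Finset.mul_sum, ← Finset.sum_mul,
    sum_div_dualRatio hp hv, hp₁, dualLevel, mul_one, one_mul]

theorem le_dualLevel {k : ι} (hp : ∀ i, 0 < p i) (hp₁ : ∑ i, p i = 1) (hk : ∀ i, f k ≤ f i)
    (hv : ∀ i, f i < v) : f k ≤ dualLevel p f v := by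
  have : Nonempty ι := ⟨k⟩
  calc f k = ∑ i, f k * (p i / dualRatio p f v i) := by
        rw [← Finset.mul_sum, sum_div_dualRatio hp hv, mul_one]
    _ ≤ ∑ i, f i * (p i / dualRatio p f v i) := by
        gcongr with i
        · exact (div_pos (hp i) (dualRatio_pos hp hv i)).le
        · exact hk i
    _ = dualLevel p f v := sum_mul_div_dualRatio hp hp₁ hv

theorem hasDerivAt_dualSlope (hv : ∀ i, f i < v) :
    HasDerivAt (dualSlope p f) (-∑ i, p i / (v - f i) ^ 2) v := by
  rw [← Finset.sum_neg_distrib]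
  refine HasDerivAt.fun_sum fun i _ => ?_
  simpa [neg_div] using (hasDerivAt_const v (p i)).fun_div
    ((hasDerivAt_id v).sub_const (f i)) (sub_pos.2 (hv i)).ne'

theorem hasDerivAt_dualLevel [Nonempty ι] (hp : ∀ i, 0 < p i) (hv : ∀ i, f i < v) :
    HasDerivAt (dualLevel p f) (dualLevelDeriv p f v) v := by
  refine ((hasDerivAt_id v).sub
    ((hasDerivAt_dualSlope hv).inv (dualSlope_pos hp hv).ne')).congr_deriv ?_
  rw [dualLevelDeriv, neg_neg]

theorem hasDerivAt_dualValue [Nonempty ι] (hp : ∀ i, 0 < p i) (hp₁ : ∑ i, p i = 1)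
    (hv : ∀ i, f i < v) :
    HasDerivAt (dualValue p f) (dualSlope p f v * dualLevelDeriv p f v) v := by
  have hl := (dualSlope_pos hp hv).ne'
  refine (HasDerivAt.fun_sum fun i _ => ((((hasDerivAt_dualSlope hv).mul
    ((hasDerivAt_id v).sub_const (f i))).log (dualRatio_pos hp hv i).ne').const_mul
      (p i))).congr_deriv ?_
  set D := ∑ i, p i / (v - f i) ^ 2 with hD
  have hterm i : p i * ((-D * (v - f i) + dualSlope p f v * 1) / (dualSlope p f v * (v - f i))) =
      p i / (v - f i) - p i * (D / dualSlope p f v) := by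
    have := (sub_pos.2 (hv i)).ne'
    field_simp
    ring
  calc _ = ∑ i, (p i / (v - f i) - p i * (D / dualSlope p f v)) := Finset.sum_congr rfl
        fun i _ => hterm i
    _ = dualSlope p f v - D / dualSlope p f v := by
        rw [Finset.sum_sub_distrib, ← Finset.sum_mul, hp₁, one_mul, dualSlope]
    _ = _ := by
        rw [dualLevelDeriv, ← hD]
        field_simp

theorem dualLevelDeriv_neg {i j : ι} (hp : ∀ i, 0 < p i) (hp₁ : ∑ i, p i = 1) (hij : f i ≠ f j)
    (hv : ∀ i, f i < v) : dualLevelDeriv p f v < 0 := by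
  have : Nonempty ι := ⟨i⟩
  have hvar : dualSlope p f v ^ 2 < ∑ i, p i / (v - f i) ^ 2 := by
    have := (even_two.strictConvexOn_pow two_ne_zero).map_sum_lt
      (t := Finset.univ) (w := p) (p := fun i => (v - f i)⁻¹) (fun i _ => hp i) hp₁
      (fun i _ => mem_univ _) ⟨i, Finset.mem_univ i, j, Finset.mem_univ j, by simpa using hij⟩
    simp only [smul_eq_mul, inv_pow, ← div_eq_mul_inv] at this
    exact this
  rw [dualLevelDeriv, sub_neg, one_lt_div (pow_pos (dualSlope_pos hp hv) 2)]
  exact hvar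

theorem dualValue_pos {i j : ι} (hp : ∀ i, 0 < p i) (hp₁ : ∑ i, p i = 1) (hij : f i ≠ f j)
    (hv : ∀ i, f i < v) : 0 < dualValue p f v := by
  have : Nonempty ι := ⟨i⟩
  have hne : (dualRatio p f v i)⁻¹ ≠ (dualRatio p f v j)⁻¹ := by
    simpa [dualRatio, (dualSlope_pos hp hv).ne'] using hij
  have := strictConcaveOn_log_Ioi.lt_map_sum (t := Finset.univ) (w := p)
    (p := fun i => (dualRatio p f v i)⁻¹) (fun i _ => hp i) hp₁
    (fun i _ => inv_pos.2 (dualRatio_pos hp hv i)) ⟨i, Finset.mem_univ i, j, Finset.mem_univ j, hne⟩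
  simp only [smul_eq_mul, Real.log_inv, mul_neg, Finset.sum_neg_distrib, ← div_eq_mul_inv,
    sum_div_dualRatio hp hv, Real.log_one, neg_lt_zero] at this
  exact this

theorem strictAntiOn_dualLevel {i j : ι} (hp : ∀ i, 0 < p i) (hp₁ : ∑ i, p i = 1)
    (hij : f i ≠ f j) {b : ℝ} (hb : ∀ i, f i ≤ b) : StrictAntiOn (dualLevel p f) (Ioi b) := by
  have : Nonempty ι := ⟨i⟩
  have hv {v} (hv : v ∈ Ioi b) i : f i < v := (hb i).trans_lt hv
  refine strictAntiOn_of_hasDerivWithinAt_neg (f' := dualLevelDeriv p f) (convex_Ioi b)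
    (fun v h => (hasDerivAt_dualLevel hp (hv h)).continuousAt.continuousWithinAt) ?_ ?_
  all_goals simp only [interior_Ioi]
  · exact fun v h => (hasDerivAt_dualLevel hp (hv h)).hasDerivWithinAt
  · exact fun v h => dualLevelDeriv_neg hp hp₁ hij (hv h)

theorem strictAntiOn_dualValue {i j : ι} (hp : ∀ i, 0 < p i) (hp₁ : ∑ i, p i = 1)
    (hij : f i ≠ f j) {b : ℝ} (hb : ∀ i, f i ≤ b) : StrictAntiOn (dualValue p f) (Ioi b) := by
  have : Nonempty ι := ⟨i⟩
  have hv {v} (hv : v ∈ Ioi b) i : f i < v := (hb i).trans_lt hv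
  refine strictAntiOn_of_hasDerivWithinAt_neg
    (f' := fun v => dualSlope p f v * dualLevelDeriv p f v) (convex_Ioi b)
    (fun v h => (hasDerivAt_dualValue hp hp₁ (hv h)).continuousAt.continuousWithinAt) ?_ ?_
  all_goals simp only [interior_Ioi]
  · exact fun v h => (hasDerivAt_dualValue hp hp₁ (hv h)).hasDerivWithinAt
  · exact fun v h => mul_neg_of_pos_of_neg (dualSlope_pos hp (hv h))
      (dualLevelDeriv_neg hp hp₁ hij (hv h))

theorem tendsto_dualRatio_atTop (hp₁ : ∑ i, p i = 1) (i : ι) :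
    Filter.Tendsto (dualRatio p f · i) Filter.atTop (nhds 1) := by
  have hquot j : Filter.Tendsto (fun v => p j * (1 + (f j - f i) * (v - f j)⁻¹)) Filter.atTop
      (nhds (p j)) := by
    simpa [← sub_eq_add_neg] using (((tendsto_inv_atTop_zero.comp
      (Filter.tendsto_atTop_add_const_right _ (-f j) Filter.tendsto_id)).const_mul
        (f j - f i)).const_add 1).const_mul (p j)
  rw [← hp₁]
  refine (tendsto_finsetSum _ fun j _ => hquot j).congr' ?_
  filter_upwards [Filter.eventually_all.2 fun j => Filter.eventually_gt_atTop (f j)] with v hv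
  rw [dualRatio, dualSlope, Finset.sum_mul]
  refine Finset.sum_congr rfl fun j _ => ?_
  have := (sub_pos.2 (hv j)).ne'
  field_simp
  ring

theorem tendsto_dualLevel_atTop [Nonempty ι] (hp : ∀ i, 0 < p i) (hp₁ : ∑ i, p i = 1) :
    Filter.Tendsto (dualLevel p f) Filter.atTop (nhds (∑ i, f i * p i)) := by
  have hlim : Filter.Tendsto (fun v => ∑ i, f i * (p i / dualRatio p f v i)) Filter.atTop
      (nhds (∑ i, f i * p i)) := tendsto_finsetSum _ fun i _ => by
    simpa using
      (tendsto_const_nhds.div (tendsto_dualRatio_atTop hp₁ i) one_ne_zero).const_mul (f i)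
  refine hlim.congr' ?_
  filter_upwards [Filter.eventually_all.2 fun j => Filter.eventually_gt_atTop (f j)] with v hv
  exact sum_mul_div_dualRatio hp hp₁ hv

theorem exists_dualLevel_eq {k : ι} (hp : ∀ i, 0 < p i) (hp₁ : ∑ i, p i = 1)
    (hk : ∀ i, f i ≤ f k) {μ : ℝ} (hμ : μ ∈ Ioo (∑ i, f i * p i) (f k)) :
    ∃ v ∈ Ioi (f k), dualLevel p f v = μ := by
  have : Nonempty ι := ⟨k⟩
  have hv {v} (hv : v ∈ Ioi (f k)) i : f i < v := (hk i).trans_lt hv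
  have hcont : ContinuousOn (dualLevel p f) (Ioi (f k)) := fun v h =>
    (hasDerivAt_dualLevel hp (hv h)).continuousAt.continuousWithinAt
  obtain ⟨v₁, hv₁μ, hv₁⟩ := (((tendsto_dualLevel_atTop hp hp₁).eventually_lt_const hμ.1).and
    (Filter.eventually_gt_atTop (f k))).exists
  have hgap : 0 < f k - μ := sub_pos.2 hμ.2
  set v₂ := f k + p k * (f k - μ)
  have hv₂ : v₂ ∈ Ioi (f k) := lt_add_of_pos_right _ (mul_pos (hp k) hgap)
  have hslope : (f k - μ)⁻¹ ≤ dualSlope p f v₂ := by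
    refine le_trans (le_of_eq ?_) (Finset.single_le_sum (f := fun i => p i / (v₂ - f i))
      (fun i _ => (div_pos (hp i) (sub_pos.2 (hv hv₂ i))).le) (Finset.mem_univ k))
    have := (hp k).ne'
    simp only [v₂, add_sub_cancel_left]
    field_simp
  have hv₂μ : μ ≤ dualLevel p f v₂ := by
    have := inv_le_of_inv_le₀ hgap hslope
    have : f k < v₂ := hv₂
    rw [dualLevel]
    linarith
  exact isPreconnected_Ioi.intermediate_value hv₁ hv₂ hcont ⟨hv₁μ.le, hv₂μ⟩

theorem two_mul_dualValue_le {k : ι} (hp : ∀ i, 0 < p i) (hp₁ : ∑ i, p i = 1) (hk : ∀ i, f k ≤ f i)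
    (hv : ∀ i, f i < v) :
    2 * dualValue p f v ≤ (dualSlope p f v * dualRatio p f v k) ^ 2 *
      ∑ i, p i * ((f i - dualLevel p f v) / dualRatio p f v i) ^ 2 := by
  have : Nonempty ι := ⟨k⟩
  have hl := dualSlope_pos hp hv
  set x := dualRatio p f v
  have hx : ∀ i, 0 < x i := dualRatio_pos hp hv
  have hxl i : 1 - dualSlope p f v * (f i - dualLevel p f v) = x i := one_sub_dualSlope_mul hp hv i
  have hxk i : x i ≤ x k := mul_le_mul_of_nonneg_left (by linarith [hk i]) hl.le
  have hk₁ : 1 ≤ x k := by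
    rw [← hxl k]
    linarith [mul_nonneg hl.le (sub_nonneg.2 (le_dualLevel hp hp₁ hk hv))]
  calc 2 * dualValue p f v
      = ∑ i, p i / x i ^ 2 * (2 * x i * (x i * log (x i) - x i + 1)) := by
        have hterm i : p i / x i ^ 2 * (2 * x i * (x i * log (x i) - x i + 1)) =
            2 * (p i * log (x i)) - 2 * p i + 2 * (p i / x i) := by
          have := (hx i).ne'
          field_simp
        simp only [hterm, Finset.sum_add_distrib, Finset.sum_sub_distrib, ← Finset.mul_sum,
          sum_div_dualRatio hp hv, hp₁, x, dualValue, sub_add_cancel]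
    _ ≤ ∑ i, p i / x i ^ 2 * (x k ^ 2 * (x i - 1) ^ 2) := by
        exact Finset.sum_le_sum fun i _ => mul_le_mul_of_nonneg_left
          (two_mul_mul_log_le (hx i) (hxk i) hk₁) (div_nonneg (hp i).le (sq_nonneg _))
    _ = _ := by
        rw [Finset.mul_sum]
        refine Finset.sum_congr rfl fun i _ => ?_
        rw [show x i - 1 = -(dualSlope p f v * (f i - dualLevel p f v)) by linarith [hxl i]]
        ring

theorem klReal_nonneg {m : ℕ} {p q : Fin (m + 1) → ℝ} (hp : p ∈ stdSimplex ℝ (Fin (m + 1)))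
    (hq : q ∈ stdSimplex ℝ (Fin (m + 1))) (hpq : ∀ i, q i = 0 → p i = 0) : 0 ≤ klReal p q := by
  rw [← sub_self (1 : ℝ), ← hp.2, klReal]
  nth_rw 2 [hp.2]
  rw [← hq.2, ← Finset.sum_sub_distrib]
  refine Finset.sum_le_sum fun i _ => ?_
  split_ifs with hi
  · linarith [hq.1 i]
  have hpi := (hp.1 i).lt_of_ne' hi
  have hqi := (hq.1 i).lt_of_ne' (mt (hpq i) hi)
  calc p i - q i = p i * (1 - (p i / q i)⁻¹) := by field_simp
    _ ≤ p i * log (p i / q i) := by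
        gcongr
        exact Real.one_sub_inv_le_log_of_pos (div_pos hpi hqi)

theorem Kinf_dualLevel_le {m : ℕ} {p f : Fin (m + 1) → ℝ} (hp : ∀ i, 0 < p i)
    (hp₁ : ∑ i, p i = 1) (hv : ∀ i, f i < v) : Kinf p (dualLevel p f v) f ≤ dualValue p f v := by
  have hq i : 0 < p i / dualRatio p f v i := div_pos (hp i) (dualRatio_pos hp hv i)
  refine csInf_le ⟨0, ?_⟩ ⟨fun i => p i / dualRatio p f v i,
    ⟨fun i => (hq i).le, sum_div_dualRatio hp hv⟩, fun i hi => absurd hi (hq i).ne',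
    (sum_mul_div_dualRatio hp hp₁ hv).ge, ?_⟩
  · rintro _ ⟨q, hq, hpq, -, rfl⟩
    exact klReal_nonneg ⟨fun i => (hp i).le, hp₁⟩ hq hpq
  · simp only [klReal, (hp _).ne', if_false, div_div_cancel₀ (hp _).ne', dualValue]

end Dual

/-! ### The boundary-crossing bound -/

section Crossing

theorem update_add_one_eq {ι : Type*} [DecidableEq ι] (α : ι → ℝ) (k : ι) :
    Function.update α k (α k + 1) = α + Pi.single k 1 := by
  ext i
  rcases eq_or_ne i k with rfl | hi <;> simp [*]

variable {ι : Type*} [Fintype ι] {p f : ι → ℝ} {v S : ℝ}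

theorem prod_dualRatio_rpow_neg (hp : ∀ i, 0 < p i) (hv : ∀ i, f i < v) :
    ∏ i, dualRatio p f v i ^ (-(S * p i)) = exp (-(S * dualValue p f v)) := by
  rw [dualValue, Finset.mul_sum, ← Finset.sum_neg_distrib, Real.exp_sum]
  refine Finset.prod_congr rfl fun i _ => ?_
  rw [Real.rpow_def_of_pos (dualRatio_pos hp hv i)]
  ring_nf

theorem prod_rpow_neg_add_single [DecidableEq ι] {x : ι → ℝ} (hx : ∀ i, 0 < x i) (α : ι → ℝ)
    (k : ι) : ∏ i, x i ^ (-(α + Pi.single k 1 : ι → ℝ) i) = (∏ i, x i ^ (-α i)) / x k := by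
  have hsingle : ∏ i, x i ^ (-(Pi.single k 1 : ι → ℝ) i) = (x k)⁻¹ := by
    rw [Finset.prod_eq_single k (fun i _ hi => by simp [hi]) (by simp), Pi.single_eq_same,
      Real.rpow_neg_one]
  simp only [Pi.add_apply, neg_add, Real.rpow_add (hx _), Finset.prod_mul_distrib, hsingle,
    div_eq_mul_inv]

theorem exists_abs_sub_dualLevel_div_dualRatio_le {k₀ k₁ : ι} (hp : ∀ i, 0 < p i)
    (hf : ∀ i, f i ∈ Icc (f k₀) (f k₁)) (hk : f k₀ ≠ f k₁) (hv : ∀ i, f i < v) :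
    ∃ j ∈ ({k₀, k₁} : Set ι), f j - dualLevel p f v ≠ 0 ∧
      ∀ i, |(f i - dualLevel p f v) / dualRatio p f v i| ≤
        |(f j - dualLevel p f v) / dualRatio p f v j| := by
  have : Nonempty ι := ⟨k₀⟩
  set a : ι → ℝ := fun i => (f i - dualLevel p f v) / dualRatio p f v i
  have hmono {i j} (hij : f i ≤ f j) : a i ≤ a j := by
    simp only [a, sub_dualLevel_div_dualRatio hp hv]
    have hl := dualSlope_pos hp hv
    have := dualRatio_pos hp hv j
    have : dualRatio p f v j ≤ dualRatio p f v i :=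
      mul_le_mul_of_nonneg_left (by linarith) hl.le
    gcongr
  obtain ⟨j, hj, hmax⟩ : ∃ j ∈ ({k₀, k₁} : Set ι), ∀ i, |a i| ≤ |a j| := by
    have hle i : |a i| ≤ max |a k₀| |a k₁| :=
      abs_le_max_abs_abs (hmono (hf i).1) (hmono (hf i).2)
    rcases max_choice |a k₀| |a k₁| with h | h <;> rw [h] at hle
    exacts [⟨k₀, by simp, hle⟩, ⟨k₁, by simp, hle⟩]
  refine ⟨j, hj, fun hj₀ => hk ?_, hmax⟩
  have hzero i : f i = dualLevel p f v := by
    have hi : |a i| ≤ 0 := by simpa [a, hj₀] using hmax i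
    simpa [a, (dualRatio_pos hp hv i).ne', sub_eq_zero] using hi
  rw [hzero k₀, hzero k₁]

theorem inv_dualRatio_mul_sqrt_le {k₀ k₁ : ι} (hp : ∀ i, 0 < p i) (hp₁ : ∑ i, p i = 1)
    (hf : ∀ i, f k₀ ≤ f i) (hk : f k₀ ≠ f k₁) (hv : ∀ i, f i < v) (hS : 0 < S) :
    (dualRatio p f v k₀)⁻¹ * √(2 * π / ∑ i, S * p i *
        ((f i - dualLevel p f v) / dualRatio p f v i) ^ 2) ≤
      √(2 * π) * (dualSlope p f v / √(2 * S * dualValue p f v)) := by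
  have : Nonempty ι := ⟨k₀⟩
  have hl := dualSlope_pos hp hv
  have hx := dualRatio_pos hp hv k₀
  have hK := dualValue_pos hp hp₁ hk hv
  simp only [mul_assoc S, ← Finset.mul_sum]
  set W := ∑ i, p i * ((f i - dualLevel p f v) / dualRatio p f v i) ^ 2
  have hKW : 2 * dualValue p f v ≤ (dualSlope p f v * dualRatio p f v k₀) ^ 2 * W :=
    two_mul_dualValue_le hp hp₁ hf hv
  have hW : 0 < W := pos_of_mul_pos_right ((mul_pos two_pos hK).trans_le hKW) (sq_nonneg _)
  have hsqrt : √(2 * S * dualValue p f v) ≤ dualSlope p f v * dualRatio p f v k₀ * √(S * W) := by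
    rw [← Real.sqrt_sq (mul_pos hl hx).le, ← Real.sqrt_mul (sq_nonneg _)]
    refine Real.sqrt_le_sqrt ?_
    linarith [mul_le_mul_of_nonneg_left hKW hS.le]
  rw [Real.sqrt_div (by positivity), mul_div_left_comm]
  refine mul_le_mul_of_nonneg_left ?_ (Real.sqrt_nonneg _)
  rw [div_le_div_iff₀ (by positivity) (by positivity), inv_mul_le_iff₀ hx]
  linarith

theorem gaussianPDFReal_zero_one_sqrt {t : ℝ} (ht : 0 ≤ t) :
    gaussianPDFReal 0 1 √(2 * t) = (2 * π)⁻¹ * √(2 * π) * exp (-t) := by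
  rw [gaussianPDFReal, sub_zero, Real.sq_sqrt (by positivity), NNReal.coe_one, mul_one, mul_one,
    inv_mul_eq_div (2 * π), Real.sqrt_div_self, neg_div, mul_div_cancel_left₀ _ two_ne_zero]

theorem lintegral_prod_norm_dualSlope_le [DecidableEq ι] {k₀ k₁ : ι} (hp : ∀ i, 0 < p i)
    (hp₁ : ∑ i, p i = 1) (hf : ∀ i, f i ∈ Icc (f k₀) (f k₁)) (hk : f k₀ ≠ f k₁)
    (hv : ∀ i, f i < v) (hS : 0 < S) {ε : ℝ} (hε : 0 < ε) (h₀ : 1 + 1 / ε ≤ S * p k₀)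
    (h₁ : 1 + 1 / ε ≤ S * p k₁) :
    ENNReal.ofReal (2 * π)⁻¹ * ∫⁻ s : ℝ, ENNReal.ofReal (∏ i,
        ‖1 - ((dualSlope p f v : ℂ) + s * Complex.I) * (f i - dualLevel p f v : ℝ)‖ ^
          (-(S • p + Pi.single k₀ 1 : ι → ℝ) i)) ≤
      ENNReal.ofReal ((1 + ε) * (dualSlope p f v / √(2 * S * dualValue p f v) *
        gaussianPDFReal 0 1 √(2 * S * dualValue p f v))) := by
  have hx := dualRatio_pos hp hv
  have hK := dualValue_pos hp hp₁ hk hv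
  obtain ⟨j, hj, hj₀, hmax⟩ := exists_abs_sub_dualLevel_div_dualRatio_le hp hf hk hv
  have hSj : 1 + 1 / ε ≤ S * p j := by rcases hj with rfl | rfl <;> assumption
  have hstudent := lintegral_prod_norm_rpow_neg_le (α := S • p) (β := S • p + Pi.single k₀ 1)
    (c := fun i => f i - dualLevel p f v) (l := dualSlope p f v) (fun i => mul_pos hS (hp i))
    (fun i => le_add_of_nonneg_right (a := S • p) (Pi.single_nonneg.2 zero_le_one) i)
    (fun i => by linarith [one_sub_dualSlope_mul hp hv i, hx i])
    (by simpa only [one_sub_dualSlope_mul hp hv]) hj₀ hε hSj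
  simp only [one_sub_dualSlope_mul hp hv, prod_rpow_neg_add_single hx, Pi.smul_apply, smul_eq_mul,
    prod_dualRatio_rpow_neg hp hv] at hstudent
  refine (mul_le_mul_right hstudent _).trans ?_
  rw [← ENNReal.ofReal_mul (by positivity)]
  refine ENNReal.ofReal_le_ofReal ?_
  set E := exp (-(S * dualValue p f v))
  calc _ = (1 + ε) * (2 * π)⁻¹ * E * ((dualRatio p f v k₀)⁻¹ * √(2 * π / ∑ i, S * p i *
          ((f i - dualLevel p f v) / dualRatio p f v i) ^ 2)) := by ring
    _ ≤ (1 + ε) * (2 * π)⁻¹ * E *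
          (√(2 * π) * (dualSlope p f v / √(2 * S * dualValue p f v))) := by
        gcongr ?_ * ?_
        exact inv_dualRatio_mul_sqrt_le (k₁ := k₁) hp hp₁ (fun i => (hf i).1) hk hv hS
    _ = _ := by
        rw [mul_assoc 2, gaussianPDFReal_zero_one_sqrt (by positivity)]
        ring

theorem setLIntegral_abs_deriv_mul_gaussianPDF_le {J : Set ℝ} (hJ : MeasurableSet J) {r r' : ℝ → ℝ}
    {c : ℝ} (hr : ∀ v ∈ J, HasDerivAt r (r' v) v) (hinj : InjOn r J) (hc : ∀ v ∈ J, c ≤ r v) :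
    ∫⁻ v in J, ENNReal.ofReal |r' v| * gaussianPDF 0 1 (r v) ≤ gaussianReal 0 1 {x | c ≤ x} := by
  rw [gaussianReal_apply 0 one_ne_zero, ← lintegral_image_eq_lintegral_abs_deriv_mul hJ
    (fun v hv => (hr v hv).hasDerivWithinAt) hinj]
  exact lintegral_mono_set (image_subset_iff.2 hc)

theorem continuousOn_dualLevelDeriv [Nonempty ι] (hp : ∀ i, 0 < p i) {b : ℝ}
    (hb : ∀ i, f i ≤ b) : ContinuousOn (dualLevelDeriv p f) (Ioi b) := by
  have hv {v} (hv : v ∈ Ioi b) i : f i < v := (hb i).trans_lt hv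
  have hslope : ContinuousOn (dualSlope p f) (Ioi b) := fun v h =>
    (hasDerivAt_dualSlope (hv h)).continuousAt.continuousWithinAt
  refine continuousOn_const.sub (ContinuousOn.div (continuousOn_finsetSum _ fun i _ => ?_)
    (hslope.pow 2) fun v h => pow_ne_zero 2 (dualSlope_pos hp (hv h)).ne')
  exact continuousOn_const.div ((continuousOn_id.sub continuousOn_const).pow 2)
    fun v h => pow_ne_zero 2 (sub_pos.2 (hv h i)).ne'

theorem Ioo_dualLevel_subset_image {k₀ k₁ : ι} (hp : ∀ i, 0 < p i) (hp₁ : ∑ i, p i = 1)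
    (hf : ∀ i, f i ≤ f k₁) (hk : f k₀ ≠ f k₁) (hv : f k₁ < v)
    (hμ : ∑ i, f i * p i < dualLevel p f v) :
    Ioo (dualLevel p f v) (f k₁) ⊆ dualLevel p f '' Ioo (f k₁) v := by
  intro u hu
  obtain ⟨w, hw, rfl⟩ := exists_dualLevel_eq hp hp₁ hf ⟨hμ.trans hu.1, hu.2⟩
  exact ⟨w, ⟨hw, ((strictAntiOn_dualLevel hp hp₁ hk hf).lt_iff_gt hv hw).1 hu.1⟩, rfl⟩

theorem setLIntegral_dualSlope_mul_gaussianPDFReal_le {k₀ k₁ : ι} (hp : ∀ i, 0 < p i)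
    (hp₁ : ∑ i, p i = 1) (hf : ∀ i, f i ≤ f k₁) (hk : f k₀ ≠ f k₁) (hv : f k₁ < v) (hS : 0 < S) :
    ENNReal.ofReal S * ∫⁻ w in Ioo (f k₁) v, ENNReal.ofReal |dualLevelDeriv p f w| *
        ENNReal.ofReal (dualSlope p f w / √(2 * S * dualValue p f w) *
          gaussianPDFReal 0 1 √(2 * S * dualValue p f w)) ≤
      gaussianReal 0 1 {x | √(2 * S * dualValue p f v) ≤ x} := by
  have : Nonempty ι := ⟨k₀⟩
  have hlt {w} (hw : w ∈ Ioi (f k₁)) i : f i < w := (hf i).trans_lt hw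
  have hK {w} (hw : w ∈ Ioi (f k₁)) : 0 < dualValue p f w := dualValue_pos hp hp₁ hk (hlt hw)
  set r : ℝ → ℝ := fun w => √(2 * S * dualValue p f w)
  have hr {w} (hw : w ∈ Ioi (f k₁)) :
      HasDerivAt r (S * (dualSlope p f w * dualLevelDeriv p f w) / r w) w := by
    have := hK hw
    refine (((hasDerivAt_dualValue hp hp₁ (hlt hw)).const_mul (2 * S)).sqrt
      (by positivity)).congr_deriv ?_
    rw [mul_assoc 2 S (_ * _), mul_div_mul_left _ _ two_ne_zero]
  have hanti : StrictAntiOn r (Ioi (f k₁)) := fun w hw w' hw' hww' =>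
    have := hK hw'
    Real.sqrt_lt_sqrt (by positivity) <| mul_lt_mul_of_pos_left
      (strictAntiOn_dualValue hp hp₁ hk hf hw hw' hww') (by positivity)
  rw [← lintegral_const_mul' _ _ ENNReal.ofReal_ne_top]
  refine le_trans (le_of_eq ?_) (setLIntegral_abs_deriv_mul_gaussianPDF_le measurableSet_Ioo
    (fun w hw => hr (Ioo_subset_Ioi_self hw)) (hanti.injOn.mono Ioo_subset_Ioi_self)
    fun w hw => (hanti hw.1 hv hw.2).le)
  refine setLIntegral_congr_fun measurableSet_Ioo fun w hw => ?_
  have hslope := dualSlope_pos hp (hlt hw.1)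
  have hdensity : |S * (dualSlope p f w * dualLevelDeriv p f w) / r w| =
      S * (|dualLevelDeriv p f w| * (dualSlope p f w / r w)) := by
    rw [abs_div, abs_mul, abs_mul, abs_of_pos hS, abs_of_pos hslope,
      abs_of_nonneg (Real.sqrt_nonneg _)]
    ring
  simp only [hdensity, gaussianPDF, r]
  rw [ENNReal.ofReal_mul hS.le, ENNReal.ofReal_mul (abs_nonneg _),
    ENNReal.ofReal_mul (by positivity)]
  ring

theorem dirichlet_dualLevel_le {m : ℕ} {p f : Fin (m + 1) → ℝ} {k₀ k₁ : Fin (m + 1)}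
    (hp : ∀ i, 0 < p i) (hp₁ : ∑ i, p i = 1) (hf : ∀ i, f i ∈ Icc (f k₀) (f k₁))
    (hk : f k₀ ≠ f k₁) (hv : f k₁ < v) (hμ : ∑ i, f i * p i < dualLevel p f v) (hS : 0 < S)
    {ε : ℝ} (hε : 0 < ε) (h₀ : 1 + 1 / ε ≤ S * p k₀) (h₁ : 1 + 1 / ε ≤ S * p k₁) :
    dirichlet m (S • p + Pi.single k₀ 1) {w | dualLevel p f v ≤ ∑ i, f i * w i} ≤
      ENNReal.ofReal (1 + ε) * gaussianReal 0 1 {x | √(2 * S * dualValue p f v) ≤ x} := by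
  have hβ i : 0 < (S • p + Pi.single k₀ 1 : Fin (m + 1) → ℝ) i :=
    (mul_pos hS (hp i)).trans_le
      (le_add_of_nonneg_right (a := S • p) (Pi.single_nonneg.2 zero_le_one) i)
  have hβS : ∑ i, (S • p + Pi.single k₀ 1 : Fin (m + 1) → ℝ) i - 1 = S := by
    simp [Finset.sum_add_distrib, ← Finset.mul_sum, hp₁]
  have hlt {w} (hw : w ∈ Ioo (f k₁) v) i : f i < w := (hf i).2.trans_lt hw.1
  calc _ ≤ dirichlet m (S • p + Pi.single k₀ 1)
          {w | ∑ i, f i * w i ∈ Ioo (dualLevel p f v) (f k₁)} :=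
        dirichlet_le_sum_mul_le hk (fun i => (hf i).2) _
    _ ≤ ENNReal.ofReal (∑ i, (S • p + Pi.single k₀ 1 : Fin (m + 1) → ℝ) i - 1) *
          ∫⁻ w in Ioo (f k₁) v, ENNReal.ofReal |dualLevelDeriv p f w| *
            (ENNReal.ofReal (2 * π)⁻¹ * ∫⁻ s : ℝ, ENNReal.ofReal (∏ i,
              ‖1 - ((dualSlope p f w : ℂ) + s * Complex.I) * (f i - dualLevel p f w : ℝ)‖ ^
                (-(S • p + Pi.single k₀ 1 : Fin (m + 1) → ℝ) i))) :=
        dirichlet_sum_mul_mem_le hβ (by linarith) isOpen_Ioo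
          (by unfold dualLevel dualSlope; fun_prop)
          (by unfold dualLevelDeriv dualSlope; fun_prop) (by unfold dualSlope; fun_prop)
          (fun w hw => hasDerivAt_dualLevel hp (hlt hw))
          (fun w hw => (dualLevelDeriv_neg hp hp₁ hk (hlt hw)).ne)
          ((continuousOn_dualLevelDeriv hp fun i => (hf i).2).mono Ioo_subset_Ioi_self)
          (fun w hw => (hasDerivAt_dualSlope (hlt hw)).continuousAt.continuousWithinAt)
          (fun w hw i => by
            linarith [one_sub_dualSlope_mul hp (hlt hw) i, dualRatio_pos hp (hlt hw) i])
          measurableSet_Ioo (Ioo_dualLevel_subset_image hp hp₁ (fun i => (hf i).2) hk hv hμ)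
    _ ≤ ENNReal.ofReal S * ∫⁻ w in Ioo (f k₁) v, ENNReal.ofReal (1 + ε) *
          (ENNReal.ofReal |dualLevelDeriv p f w| *
            ENNReal.ofReal (dualSlope p f w / √(2 * S * dualValue p f w) *
              gaussianPDFReal 0 1 √(2 * S * dualValue p f w))) := by
        rw [hβS]
        gcongr ENNReal.ofReal S * ?_
        refine setLIntegral_mono' measurableSet_Ioo fun w hw => ?_
        rw [mul_left_comm (ENNReal.ofReal (1 + ε)), ← ENNReal.ofReal_mul (by positivity)]
        gcongr
        exact lintegral_prod_norm_dualSlope_le hp hp₁ hf hk (hlt hw) hS hε h₀ h₁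
    _ ≤ _ := by
        rw [lintegral_const_mul' _ _ ENNReal.ofReal_ne_top, mul_left_comm]
        gcongr
        exact setLIntegral_dualSlope_mul_gaussianPDFReal_le hp hp₁ (fun i => (hf i).2) hk hv hS

theorem one_add_inv_le_c0_div_sq {ε : ℝ} (hε : ε ∈ Ioo 0 1) : 1 + 1 / ε ≤ c0 / ε ^ 2 := by
  have hε₀ := hε.1
  have hc0 : 2 ≤ c0 := by
    have hπ : (1 / 2 : ℝ) ≤ 2 / π := by
      rw [div_le_div_iff₀ two_pos pi_pos]
      linarith [pi_le_four]
    calc (2 : ℝ) ≤ 1 / 2 * 8 ^ 2 := by norm_num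
      _ ≤ c0 := by
        unfold c0
        gcongr
        exact le_add_of_nonneg_right (by positivity)
  rw [le_div_iff₀ (by positivity)]
  calc (1 + 1 / ε) * ε ^ 2 = ε ^ 2 + ε := by field_simp
    _ ≤ c0 := by nlinarith [hε.2]

theorem dirichlet_crossing_upper_general {m : ℕ} {f α : Fin (m + 1) → ℝ} {k₀ k₁ : Fin (m + 1)}
    (hf : ∀ i, f i ∈ Icc (f k₀) (f k₁)) (hα : ∀ i, 0 < α i) {ε : ℝ} (hε : 0 < ε)
    (h₀ : 1 + 1 / ε ≤ α k₀) (h₁ : 1 + 1 / ε ≤ α k₁) {μ : ℝ}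
    (hμ : μ ∈ Ioo (∑ ℓ, f ℓ * (α ℓ / ∑ j, α j)) (f k₁)) :
    dirichlet m (Function.update α k₀ (α k₀ + 1)) {w | μ ≤ ∑ ℓ, f ℓ * w ℓ} ≤
      ENNReal.ofReal (1 + ε) * gaussianReal 0 1
        {x | √(2 * (∑ j, α j) * Kinf (fun ℓ => α ℓ / ∑ j, α j) μ f) ≤ x} := by
  set S := ∑ j, α j
  set p : Fin (m + 1) → ℝ := fun ℓ => α ℓ / S
  have hS : 0 < S := Finset.sum_pos (fun i _ => hα i) Finset.univ_nonempty
  have hp i : 0 < p i := div_pos (hα i) hS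
  have hp₁ : ∑ i, p i = 1 := by rw [← Finset.sum_div, div_self hS.ne']
  have hα_eq : α = S • p := funext fun i => (mul_div_cancel₀ (α i) hS.ne').symm
  have hk : f k₀ ≠ f k₁ := fun hk => by
    have hconst i : f i = f k₁ := (hf i).2.antisymm (hk ▸ (hf i).1)
    have hmean : ∑ i, f i * p i = f k₁ := by simp only [hconst, ← Finset.mul_sum, hp₁, mul_one]
    exact (hμ.1.trans hμ.2).ne hmean
  obtain ⟨v, hv, rfl⟩ := exists_dualLevel_eq hp hp₁ (fun i => (hf i).2) hμ
  rw [update_add_one_eq, hα_eq]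
  rw [hα_eq] at h₀ h₁
  refine (dirichlet_dualLevel_le hp hp₁ hf hk hv hμ.1 hS hε h₀ h₁).trans ?_
  gcongr
  exact Kinf_dualLevel_le hp hp₁ fun i => (hf i).2.trans_lt hv

end Crossing

/-- **Upper bound on Dirichlet boundary-crossing probabilities** (Theorem 1, upper bound). -/
theorem dirichlet_crossing_upper
    (m : ℕ) (hm : 1 ≤ m) (b : ℝ) (hb : 0 < b)
    (f : Fin (m + 1) → ℝ) (hf : ∀ i, f i ∈ Set.Icc (0 : ℝ) b)
    (hf0 : f 0 = 0) (hfm : f (Fin.last m) = b)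
    (α : Fin (m + 1) → ℝ) (hα : ∀ i, 0 < α i)
    (ε : ℝ) (hε : ε ∈ Set.Ioo (0 : ℝ) 1)
    (hmin : c0 / ε ^ 2 ≤ min (α 0) (α (Fin.last m)))
    (μ : ℝ) (hμ : μ ∈ Set.Ioo (∑ ℓ, f ℓ * (α ℓ / ∑ j, α j)) b) :
    dirichlet m (Function.update α 0 (α 0 + 1)) {w | μ ≤ ∑ ℓ, f ℓ * w ℓ}
      ≤ ENNReal.ofReal (1 + ε) *
        gaussianReal 0 1
          {x | Real.sqrt (2 * (∑ j, α j) * Kinf (fun ℓ => α ℓ / ∑ j, α j) μ f) ≤ x} := by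
  subst hfm
  have hα₀₁ := le_min_iff.1 ((one_add_inv_le_c0_div_sq hε).trans hmin)
  exact dirichlet_crossing_upper_general (fun i => hf0 ▸ hf i) hα hε.1 hα₀₁.1 hα₀₁.2 hμ

end
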